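/- arXiv:1601.01629 — 3 statements merged into one kernel-verified Lean document; each statement's English description precedes it below -/
import Mathlib

section
/- For every integer n ≥ 1 there exists a constant C_n > 0 (depending only on n) such that for every finite set X of points in ℝ^n and every integer D ≥ 1, there exists a non-zero polynomial p ∈ ℝ[X₁,…,X_n] of total degree at most D such that every connected component of ℝ^n \ Z(p) contains at most C_n · D^(−n) · |X| points of X. -/
open Finset

noncomputable def PPdet {ι : Type} [Fintype ι] [DecidableEq ι] {α : ι → Type}
    (v : ∀ i, α i → Option ι → ℝ) (R : ∀ i, α i) (z : Option ι → ℝ) : ℝ :=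
  Matrix.det (Matrix.of (fun o : Option ι => o.elim z (fun i => v i (R i))))

lemma PPdet_swap {ι : Type} [Fintype ι] [DecidableEq ι] {α : ι → Type}
    (v : ∀ i, α i → Option ι → ℝ) (R : ∀ i, α i) (i : ι) (x y : α i) :
    PPdet v (Function.update R i y) (v i x) = - PPdet v (Function.update R i x) (v i y) := by
  unfold PPdet
  have h := Matrix.det_permute (Equiv.swap none (some i))
    (Matrix.of (fun o : Option ι => o.elim (v i y) (fun j => v j (Function.update R i x j))))
  rw [Equiv.Perm.sign_swap (by simp)] at h
  simp only [Units.val_neg, Units.val_one, Int.cast_neg, Int.cast_one, neg_mul, one_mul] at h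
  rw [← h]
  congr 1
  ext o k
  rcases o with _ | j
  · simp
  · by_cases hj : j = i
    · subst hj; simp
    · have : Equiv.swap none (some i) (some j) = some j :=
        Equiv.swap_apply_of_ne_of_ne (by simp) (by simpa using hj)
      simp [this, hj]

def PPsig {ι : Type} [DecidableEq ι] {α : ι → Type} (i : ι) (a : (∀ j, α j) × α i × α i) :
    (∀ j, α j) × α i × α i := (Function.update a.1 i a.2.1, a.2.2, a.1 i)

lemma PPsig2 {ι : Type} [DecidableEq ι] {α : ι → Type} (i : ι) (a : (∀ j, α j) × α i × α i) :
    PPsig i (PPsig i a) = (Function.update a.1 i a.2.2, a.1 i, a.2.1) := by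
  simp [PPsig]

lemma PPsig3 {ι : Type} [DecidableEq ι] {α : ι → Type} (i : ι) (a : (∀ j, α j) × α i × α i) :
    PPsig i (PPsig i (PPsig i a)) = a := by
  rw [PPsig2]
  simp [PPsig]

lemma PP_one {ι : Type} [Fintype ι] [DecidableEq ι] {α : ι → Type} [∀ i, Fintype (α i)]
    (v : ∀ i, α i → Option ι → ℝ) (i : ι) :
    3 * ∑ R : (∀ j, α j), ∑ q : α i × α i,
      (if 0 < PPdet v R (v i q.1) * PPdet v R (v i q.2) then 1 else 0)
      ≤ ∑ _R : (∀ j, α j), 2 * (Fintype.card (α i)) ^ 2 := by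
  classical
  rw [← Fintype.sum_prod_type'
    (fun R (q : α i × α i) => if 0 < PPdet v R (v i q.1) * PPdet v R (v i q.2) then 1 else 0)]
  set s : (∀ j, α j) × α i × α i → ℕ := fun a =>
    if 0 < PPdet v a.1 (v i a.2.1) * PPdet v a.1 (v i a.2.2) then 1 else 0 with hs
  have hbij : Function.Bijective (PPsig (α := α) i) :=
    ⟨fun a b h => by rw [← PPsig3 i a, ← PPsig3 i b, h], fun a => ⟨_, PPsig3 i a⟩⟩
  have h1 : ∑ a, s (PPsig i a) = ∑ a, s a := hbij.sum_comp s
  have h2 : ∑ a, s (PPsig i (PPsig i a)) = ∑ a, s a := by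
    rw [← h1]; exact hbij.sum_comp (fun a => s (PPsig i a))
  have h3 : ∀ a, s a + s (PPsig i a) + s (PPsig i (PPsig i a)) ≤ 2 := by
    rintro ⟨R, y, z⟩
    rw [PPsig2]
    simp only [PPsig, hs]
    have e1 := PPdet_swap v R i (R i) y
    have e2 := PPdet_swap v R i (R i) z
    have e3 := PPdet_swap v R i z y
    rw [Function.update_eq_self] at e1 e2
    rw [e1, e2, e3]
    generalize PPdet v R (v i y) = A
    generalize PPdet v R (v i z) = B
    generalize PPdet v (Function.update R i z) (v i y) = C
    by_contra hcon
    have : 0 < A * B ∧ 0 < -C * -A ∧ 0 < -B * C := by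
      refine ⟨?_, ?_, ?_⟩ <;> by_contra hh <;> rw [if_neg hh] at hcon <;> split_ifs at hcon <;> omega
    obtain ⟨p1, p2, p3⟩ := this
    have := mul_pos (mul_pos p1 p2) p3
    nlinarith [sq_nonneg (A * B * C)]
  calc 3 * ∑ a, s a = ∑ a, (s a + s (PPsig i a) + s (PPsig i (PPsig i a))) := by
        rw [sum_add_distrib, sum_add_distrib, h1, h2]; ring
    _ ≤ ∑ a : (∀ j, α j) × α i × α i, 2 := sum_le_sum (fun a _ => h3 a)
    _ = _ := by simp [Fintype.card_prod]; ring

lemma PP_gen {ι : Type} [Fintype ι] [DecidableEq ι] {α : ι → Type} [∀ i, Fintype (α i)]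
    [∀ i, Nonempty (α i)] (v : ∀ i, α i → Option ι → ℝ) :
    ∃ R : (∀ j, α j), 3 * ∑ i, ∑ q : α i × α i,
      (if 0 < PPdet v R (v i q.1) * PPdet v R (v i q.2) then 1 else 0)
      ≤ ∑ i, 2 * (Fintype.card (α i)) ^ 2 := by
  classical
  have h : ∑ R : (∀ j, α j), 3 * ∑ i, ∑ q : α i × α i,
      (if 0 < PPdet v R (v i q.1) * PPdet v R (v i q.2) then 1 else 0)
      ≤ ∑ R : (∀ j, α j), ∑ i, 2 * (Fintype.card (α i)) ^ 2 := by
    rw [← mul_sum, sum_comm, mul_sum]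
    refine le_trans (sum_le_sum (fun i _ => PP_one v i)) ?_
    rw [sum_comm]
  obtain ⟨R, -, hR⟩ := exists_le_of_sum_le univ_nonempty h
  exact ⟨R, hR⟩

lemma PPdet_lin {ι : Type} [Fintype ι] [DecidableEq ι] {α : ι → Type}
    (v : ∀ i, α i → Option ι → ℝ) (R : ∀ i, α i) :
    ∃ a : Option ι → ℝ, ∀ z, PPdet v R z = ∑ o, a o * z o := by
  let M : Matrix (Option ι) (Option ι) ℝ :=
    Matrix.of (fun o : Option ι => o.elim 0 (fun i => v i (R i)))
  have hM : ∀ z, PPdet v R z = (Matrix.detRowAlternating (R := ℝ)).toMultilinearMap.toLinearMap M none z := by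
    intro z
    show _ = Matrix.det (Function.update M none z)
    unfold PPdet
    congr 1
    ext o k
    rcases o with _ | j
    · show z k = Function.update M none z none k
      exact (congrFun (Function.update_self (none : Option ι) z (fun o k => M o k)) k).symm
    · simp [M, Function.update]
  refine ⟨fun o => (Matrix.detRowAlternating (R := ℝ)).toMultilinearMap.toLinearMap M none (Pi.single o 1), fun z => ?_⟩
  rw [hM]
  conv_lhs => rw [pi_eq_sum_univ' z]
  rw [map_sum]
  refine sum_congr rfl (fun o _ => ?_)
  rw [map_smul, smul_eq_mul, mul_comm]

/-- perturbed version -/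
lemma PP_pert {ι : Type} [Fintype ι] [DecidableEq ι] {α : ι → Type} [∀ i, Fintype (α i)]
    [∀ i, Nonempty (α i)] (v : ∀ i, α i → Option ι → ℝ) (ε : ℝ) (hε : 0 < ε) :
    ∃ t : ℝ, 0 < t ∧ t < ε ∧ ∃ a : Option ι → ℝ, ‖a‖ = 1 ∧ 3 * ∑ i, ∑ q : α i × α i,
      (if 0 < (∑ o, a o * (v i q.1 o + t * (Pi.single (some i) 1 : Option ι → ℝ) o)) *
         (∑ o, a o * (v i q.2 o + t * (Pi.single (some i) 1 : Option ι → ℝ) o)) then 1 else 0)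
      ≤ ∑ i, 2 * (Fintype.card (α i)) ^ 2 := by
  classical
  let A : (∀ i, α i) → Matrix (Option ι) (Option ι) ℝ := fun R =>
    Matrix.of (fun o : Option ι => o.elim 0 (fun i => v i (R i)))
  have hfin : (⋃ R : (∀ i, α i), {t : ℝ | (-(A R)).charpoly.IsRoot t}).Finite :=
    Set.finite_iUnion (fun R => Polynomial.finite_setOfPred_isRoot (Matrix.charpoly_monic _).ne_zero)
  obtain ⟨t, ⟨ht0, ht1⟩, ht⟩ := (Set.Ioo_infinite hε).exists_notMem_finite hfin
  refine ⟨t, ht0, ht1, ?_⟩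
  let w : ∀ i, α i → Option ι → ℝ := fun i y o => v i y o + t * (Pi.single (some i) 1 : Option ι → ℝ) o
  obtain ⟨R, hR⟩ := PP_gen w
  obtain ⟨a, ha⟩ := PPdet_lin w R
  have hne : PPdet w R (t • Pi.single none 1) ≠ 0 := by
    intro h0
    apply ht
    simp only [Set.mem_iUnion, Set.mem_ofPred_eq]
    refine ⟨R, ?_⟩
    rw [Polynomial.IsRoot.def, Matrix.eval_charpoly, ← h0]
    unfold PPdet
    congr 1
    ext o k
    rcases o with _ | j
    · simp [A, Pi.single_apply, Matrix.scalar_apply, Matrix.diagonal_apply, eq_comm]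
    · simp [A, w, Pi.single_apply, Matrix.scalar_apply, Matrix.diagonal_apply, eq_comm]
      ring
  have ha0 : a ≠ 0 := by
    rintro rfl
    exact hne (by rw [ha]; simp)
  have hn : 0 < ‖a‖ := norm_pos_iff.mpr ha0
  refine ⟨‖a‖⁻¹ • a, by rw [norm_smul, norm_inv, norm_norm, inv_mul_cancel₀ hn.ne'], ?_⟩
  refine le_trans (le_of_eq ?_) hR
  congr 1
  refine sum_congr rfl (fun i _ => sum_congr rfl (fun q _ => ?_))
  have key : ∀ z : Option ι → ℝ, ∑ o, (‖a‖⁻¹ • a) o * z o = ‖a‖⁻¹ * PPdet w R z := by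
    intro z
    rw [ha, mul_sum]
    exact sum_congr rfl (fun o _ => by simp [mul_assoc])
  have k1 := key (w i q.1)
  have k2 := key (w i q.2)
  simp only [w] at k1 k2 ⊢
  rw [k1, k2]
  congr 1
  have : ∀ x y : ℝ, (0 < ‖a‖⁻¹ * x * (‖a‖⁻¹ * y)) = (0 < x * y) := by
    intro x y
    rw [show ‖a‖⁻¹ * x * (‖a‖⁻¹ * y) = (‖a‖⁻¹ * ‖a‖⁻¹) * (x * y) by ring]
    exact propext (mul_pos_iff_of_pos_left (by positivity))
  rw [this]

lemma PP_ham {ι : Type} [Fintype ι] [DecidableEq ι] {α : ι → Type} [∀ i, Fintype (α i)]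
    [∀ i, Nonempty (α i)] (v : ∀ i, α i → Option ι → ℝ) :
    ∃ a : Option ι → ℝ, a ≠ 0 ∧ 3 * ∑ i, ∑ q : α i × α i,
      (if 0 < (∑ o, a o * v i q.1 o) * (∑ o, a o * v i q.2 o) then 1 else 0)
      ≤ ∑ i, 2 * (Fintype.card (α i)) ^ 2 := by
  classical
  have h := fun m : ℕ => PP_pert v (1 / ((m : ℝ) + 1)) (by positivity)
  choose t ht0 ht1 a ha hsum using h
  have ht : Filter.Tendsto t Filter.atTop (nhds 0) :=
    squeeze_zero (fun m => (ht0 m).le) (fun m => (ht1 m).le) tendsto_one_div_add_atTop_nhds_zero_nat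
  obtain ⟨b, hb, φ, hφ, hlim⟩ := (isCompact_sphere (0 : Option ι → ℝ) 1).tendsto_subseq
    (x := a) (fun m => by simp [ha])
  have hb1 : ‖b‖ = 1 := by simpa using hb
  refine ⟨b, by rintro rfl; simp at hb1, ?_⟩
  have htφ := ht.comp hφ.tendsto_atTop
  have hT : ∀ i (y : α i), Filter.Tendsto (fun m => ∑ o, a (φ m) o *
      (v i y o + t (φ m) * (Pi.single (some i) 1 : Option ι → ℝ) o)) Filter.atTop
      (nhds (∑ o, b o * v i y o)) := by
    intro i y
    refine tendsto_finsetSum _ (fun o _ => ?_)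
    have h1 : Filter.Tendsto (fun m => a (φ m) o) Filter.atTop (nhds (b o)) :=
      (tendsto_pi_nhds.mp hlim) o
    have h2 : Filter.Tendsto (fun m => v i y o + t (φ m) * (Pi.single (some i) 1 : Option ι → ℝ) o)
      Filter.atTop (nhds (v i y o + 0 * (Pi.single (some i) 1 : Option ι → ℝ) o)) :=
      tendsto_const_nhds.add (htφ.mul_const _)
    simpa using h1.mul h2
  have hev : ∀ᶠ m in Filter.atTop, ∀ i, ∀ q : α i × α i,
      0 < (∑ o, b o * v i q.1 o) * (∑ o, b o * v i q.2 o) →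
      0 < (∑ o, a (φ m) o * (v i q.1 o + t (φ m) * (Pi.single (some i) 1 : Option ι → ℝ) o)) *
         (∑ o, a (φ m) o * (v i q.2 o + t (φ m) * (Pi.single (some i) 1 : Option ι → ℝ) o)) := by
    refine Filter.eventually_all.mpr (fun i => Filter.eventually_all.mpr (fun q => ?_))
    by_cases hq : 0 < (∑ o, b o * v i q.1 o) * (∑ o, b o * v i q.2 o)
    · filter_upwards [((hT i q.1).mul (hT i q.2)).eventually (lt_mem_nhds hq)] with m hm _ using hm
    · exact Filter.Eventually.of_forall (fun m h => absurd h hq)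
  obtain ⟨m, hm⟩ := hev.exists
  refine le_trans ?_ (hsum (φ m))
  refine Nat.mul_le_mul_left _ (sum_le_sum fun i _ => sum_le_sum fun q _ => ?_)
  split_ifs with h1 h2 <;> first | omega | exact absurd (hm i q h1) h2

lemma PP_step (n : ℕ) (hn : 1 ≤ n) {ι : Type} [Fintype ι] (Q : ι → Finset (Fin n → ℝ))
    (hQ : ∀ i, (Q i).Nonempty) :
    ∃ q : MvPolynomial (Fin n) ℝ, q ≠ 0 ∧
      (q.totalDegree : ℝ) ≤ n * (Fintype.card ι : ℝ) ^ (1 / (n : ℝ)) ∧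
      3 * ∑ i, ((#{x ∈ Q i | 0 < MvPolynomial.eval x q}) ^ 2 +
        (#{x ∈ Q i | MvPolynomial.eval x q < 0}) ^ 2) ≤ 2 * ∑ i, #(Q i) ^ 2 := by
  classical
  set K := Fintype.card ι with hK
  set e := ⌊(K : ℝ) ^ (1 / (n : ℝ))⌋₊ with he
  have hKr : (0 : ℝ) ≤ (K : ℝ) ^ (1 / (n : ℝ)) := by positivity
  have hn0 : (n : ℝ) ≠ 0 := by positivity
  have hKe : K < (e + 1) ^ n := by
    have h1 : (K : ℝ) ^ (1 / (n : ℝ)) < e + 1 := Nat.lt_floor_add_one _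
    have h2 : ((K : ℝ) ^ (1 / (n : ℝ))) ^ n = K := by
      rw [← Real.rpow_natCast, ← Real.rpow_mul (by positivity), one_div_mul_cancel hn0, Real.rpow_one]
    have h3 := pow_lt_pow_left₀ h1 hKr (by omega : n ≠ 0)
    rw [h2] at h3
    exact_mod_cast h3
  obtain ⟨f⟩ : Nonempty (Option ι ↪ (Fin n → Fin (e + 1))) := by
    apply Function.Embedding.nonempty_of_card_le
    simp only [Fintype.card_option, Fintype.card_fun, Fintype.card_fin]
    omega
  let g : Option ι → (Fin n →₀ ℕ) := fun o => Finsupp.equivFunOnFinite.symm (fun j => (f o j : ℕ))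
  have hg : Function.Injective g := by
    intro o o' h
    apply f.injective
    funext j
    have := DFunLike.congr_fun h j
    simpa [g, Fin.ext_iff] using this
  have : ∀ i, Nonempty (Q i) := fun i => (hQ i).to_subtype
  obtain ⟨a, ha0, ha⟩ := PP_ham (α := fun i => (Q i : Type))
    (fun i x o => MvPolynomial.eval (x : Fin n → ℝ) (MvPolynomial.monomial (g o) (1 : ℝ)))
  let q : MvPolynomial (Fin n) ℝ := ∑ o, MvPolynomial.monomial (g o) (a o)
  have hev : ∀ x, MvPolynomial.eval x q =
      ∑ o, a o * MvPolynomial.eval x (MvPolynomial.monomial (g o) (1 : ℝ)) := by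
    intro x
    simp [q, map_sum, MvPolynomial.eval_monomial]
  refine ⟨q, ?_, ?_, ?_⟩
  · intro hq
    apply ha0
    funext o
    have : MvPolynomial.coeff (g o) q = a o := by
      simp only [q, MvPolynomial.coeff_sum, MvPolynomial.coeff_monomial]
      rw [sum_eq_single o]
      · simp
      · intro b _ hb
        rw [if_neg (fun h => hb (hg h))]
      · simp
    rw [← this, hq]; simp
  · have h1 : q.totalDegree ≤ n * e := by
      refine MvPolynomial.totalDegree_finsetSum_le (fun o _ => ?_)
      refine (MvPolynomial.totalDegree_monomial_le _ _).trans ?_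
      rw [Finsupp.sum_fintype _ _ (by simp)]
      refine (sum_le_card_nsmul univ _ e (fun j _ => ?_)).trans (by simp)
      simp [g]; omega
    have h2 : (e : ℝ) ≤ (K : ℝ) ^ (1 / (n : ℝ)) := Nat.floor_le hKr
    calc (q.totalDegree : ℝ) ≤ ((n * e : ℕ) : ℝ) := by exact_mod_cast h1
      _ ≤ _ := by push_cast; gcongr
  · simp only [← hev] at ha
    rw [mul_sum _ _ 2]
    refine le_trans (Nat.mul_le_mul_left 3 (sum_le_sum fun i _ => ?_)) (ha.trans ?_)
    · rw [Fintype.sum_prod_type]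
      rw [sum_coe_sort (Q i) (fun x => ∑ y : Q i, (if 0 < MvPolynomial.eval x q * MvPolynomial.eval (y : Fin n → ℝ) q then 1 else 0))]
      have : ∀ x, ∑ y : Q i, (if 0 < MvPolynomial.eval x q * MvPolynomial.eval (y : Fin n → ℝ) q then 1 else 0)
          = ∑ y ∈ Q i, (if 0 < MvPolynomial.eval x q * MvPolynomial.eval y q then 1 else 0) := fun x =>
        sum_coe_sort (Q i) (fun y => (if 0 < MvPolynomial.eval x q * MvPolynomial.eval y q then 1 else 0))
      simp only [this]
      rw [← sum_product', ← card_filter]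
      set P := {x ∈ Q i | 0 < MvPolynomial.eval x q} with hP
      set Z := {x ∈ Q i | MvPolynomial.eval x q < 0} with hZ
      have hd : Disjoint (P ×ˢ P) (Z ×ˢ Z) := by
        rw [disjoint_left]
        rintro ⟨x, y⟩ h1 h2
        simp only [hP, hZ, mem_product, mem_filter] at h1 h2
        linarith [h1.1.2, h2.1.2]
      rw [sq, sq, ← card_product, ← card_product, ← card_union_of_disjoint hd]
      apply card_le_card
      rintro ⟨x, y⟩ h
      simp only [hP, hZ, mem_union, mem_product, mem_filter] at h ⊢
      rcases h with ⟨⟨h1, h2⟩, h3, h4⟩ | ⟨⟨h1, h2⟩, h3, h4⟩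
      · exact ⟨⟨h1, h3⟩, mul_pos h2 h4⟩
      · exact ⟨⟨h1, h3⟩, mul_pos_of_neg_of_neg h2 h4⟩
    · simp

lemma PP_sign {n : ℕ} (q : MvPolynomial (Fin n) ℝ) (S : Set (Fin n → ℝ)) (hS : IsPreconnected S)
    (h : ∀ x ∈ S, MvPolynomial.eval x q ≠ 0) :
    (∀ x ∈ S, 0 < MvPolynomial.eval x q) ∨ (∀ x ∈ S, MvPolynomial.eval x q < 0) := by
  by_contra hcon
  push Not at hcon
  obtain ⟨⟨x, hx, hx0⟩, y, hy, hy0⟩ := hcon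
  have hc : ContinuousOn (fun x => MvPolynomial.eval x q) S :=
    (MvPolynomial.continuous_eval q).continuousOn
  obtain ⟨z, hz, hz0⟩ := hS.intermediate_value hx hy hc ⟨hx0, hy0⟩
  exact h z hz hz0

lemma PP_A (n : ℕ) (hn : 1 ≤ n) (c : ℝ) (hc0 : 0 ≤ c)
    (hc : n + c * (2 / 3 : ℝ) ^ (1 / (n : ℝ)) ≤ c) (T : ℝ) (hT : 0 < T) (N : ℕ) :
    ∀ (ι : Type) [Fintype ι] (Q : ι → Finset (Fin n → ℝ)), ∑ i, #(Q i) ^ 2 = N →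
    ∃ p : MvPolynomial (Fin n) ℝ, p ≠ 0 ∧
      (p.totalDegree : ℝ) ≤ c * (N / T ^ 2) ^ (1 / (n : ℝ)) ∧
      ∃ (κ : Type) (_ : Fintype κ) (Q' : κ → Finset (Fin n → ℝ)),
        ∑ k, #(Q' k) ≤ ∑ i, #(Q i) ∧ (∀ k, (#(Q' k) : ℝ) ≤ T) ∧
        ∀ S : Set (Fin n → ℝ), IsPreconnected S → (∀ x ∈ S, MvPolynomial.eval x p ≠ 0) →
          ∀ i, ∃ k, ∀ x ∈ Q i, x ∈ S → x ∈ Q' k := by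
  classical
  induction N using Nat.strong_induction_on with
  | _ N ih =>
  intro ι _ Q hN
  let Big := {i // T < #(Q i)}
  let Small := {i // ¬ T < #(Q i)}
  have hsplit : ∀ F : ι → ℕ, ∑ i : Big, F i + ∑ i : Small, F i = ∑ i, F i := fun F =>
    Fintype.sum_subtype_add_sum_subtype (fun i => T < #(Q i)) F
  by_cases hB : IsEmpty Big
  · refine ⟨1, one_ne_zero, by simp; positivity, ι, inferInstance, Q, le_rfl, fun k => ?_,
      fun S _ _ i => ⟨i, fun x hx _ => hx⟩⟩
    by_contra hk
    exact hB.false ⟨k, not_le.mp hk⟩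
  rw [not_isEmpty_iff] at hB
  obtain ⟨q, hq0, hqd, hq⟩ := PP_step n hn (fun i : Big => Q i) (fun i => by
    rw [← card_pos]
    have := hT.trans i.2
    exact_mod_cast this)
  let Q1 : Big × Bool → Finset (Fin n → ℝ) := fun ib =>
    if ib.2 then {x ∈ Q ib.1 | 0 < MvPolynomial.eval x q} else {x ∈ Q ib.1 | MvPolynomial.eval x q < 0}
  have hsumQ1 : ∑ ib, #(Q1 ib) ^ 2 = ∑ i : Big, ((#{x ∈ Q i | 0 < MvPolynomial.eval x q}) ^ 2 +
        (#{x ∈ Q i | MvPolynomial.eval x q < 0}) ^ 2) := by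
    rw [Fintype.sum_prod_type]
    simp [Q1]
  have hsumQ1' : ∑ ib, #(Q1 ib) ≤ ∑ i : Big, #(Q i) := by
    rw [Fintype.sum_prod_type]
    refine sum_le_sum (fun i _ => ?_)
    simp only [Q1, Fintype.sum_bool, if_true, Bool.false_eq_true, if_false]
    rw [← card_union_of_disjoint]
    · exact card_le_card (union_subset (filter_subset _ _) (filter_subset _ _))
    · rw [disjoint_left]
      intro x h1 h2
      simp only [mem_filter] at h1 h2
      linarith [h1.2, h2.2]
  obtain ⟨N', hN'⟩ : ∃ N', N' = ∑ ib, #(Q1 ib) ^ 2 := ⟨_, rfl⟩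
  rw [← hsumQ1, ← hN'] at hq
  have hNB : ∑ i : Big, #(Q i) ^ 2 ≤ N := by
    rw [← hN, ← hsplit (fun i => #(Q i) ^ 2)]; exact Nat.le_add_right _ _
  have hKT : (Fintype.card Big : ℝ) * T ^ 2 ≤ N := by
    calc (Fintype.card Big : ℝ) * T ^ 2 = ∑ i : Big, T ^ 2 := by simp
      _ ≤ ∑ i : Big, (#(Q i) : ℝ) ^ 2 := sum_le_sum (fun i _ => by
          have := i.2.le
          gcongr)
      _ ≤ N := by exact_mod_cast hNB
  have hNpos : 0 < N := by
    have : (0 : ℝ) < (Fintype.card Big : ℝ) * T ^ 2 := by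
      have : 0 < Fintype.card Big := Fintype.card_pos
      positivity
    exact_mod_cast this.trans_le hKT
  obtain ⟨p, hp0, hpd, κ, _, Q', hs, hb, hcov⟩ := ih N' (by omega) (Big × Bool) Q1 hN'.symm
  refine ⟨q * p, mul_ne_zero hq0 hp0, ?_, κ ⊕ Small, inferInstance,
    Sum.elim Q' (fun i => Q i), ?_, ?_, ?_⟩
  · have hr : (0 : ℝ) ≤ 1 / (n : ℝ) := by positivity
    have h1 : (Fintype.card Big : ℝ) ≤ N / T ^ 2 := by rwa [le_div_iff₀ (by positivity)]
    have h2 : (N' : ℝ) / T ^ 2 ≤ 2 / 3 * (N / T ^ 2) := by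
      have : (3 * N' : ℝ) ≤ 2 * N := by exact_mod_cast hq.trans (by omega)
      rw [← mul_div_assoc]
      gcongr
      linarith
    have h3 : ((N' : ℝ) / T ^ 2) ^ (1 / (n : ℝ)) ≤
        (2 / 3 : ℝ) ^ (1 / (n : ℝ)) * (N / T ^ 2) ^ (1 / (n : ℝ)) := by
      rw [← Real.mul_rpow (by positivity) (by positivity)]
      exact Real.rpow_le_rpow (by positivity) h2 hr
    have h4 : (Fintype.card Big : ℝ) ^ (1 / (n : ℝ)) ≤ (N / T ^ 2) ^ (1 / (n : ℝ)) :=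
      Real.rpow_le_rpow (by positivity) h1 hr
    have h5 : ((q * p).totalDegree : ℝ) ≤ q.totalDegree + p.totalDegree := by
      exact_mod_cast MvPolynomial.totalDegree_mul q p
    have h6 : (0 : ℝ) ≤ (N / T ^ 2) ^ (1 / (n : ℝ)) := by positivity
    set W := ((N : ℝ) / T ^ 2) ^ (1 / (n : ℝ))
    have h7 := mul_le_mul_of_nonneg_left h3 hc0
    have h8 := mul_le_mul_of_nonneg_left h4 (Nat.cast_nonneg (α := ℝ) n)
    have h9 := mul_le_mul_of_nonneg_right hc h6
    linarith
  · rw [Fintype.sum_sum_type, ← hsplit (fun i => #(Q i))]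
    simp only [Sum.elim_inl, Sum.elim_inr]
    have := hs.trans hsumQ1'
    omega
  · rintro (k | k)
    · exact hb k
    · exact not_lt.mp k.2
  · intro S hS hSp i
    by_cases hi : T < #(Q i)
    · have hSq : ∀ x ∈ S, MvPolynomial.eval x q ≠ 0 := fun x hx h0 => hSp x hx (by simp [h0])
      have hSp' : ∀ x ∈ S, MvPolynomial.eval x p ≠ 0 := fun x hx h0 => hSp x hx (by simp [h0])
      rcases PP_sign q S hS hSq with h | h
      · obtain ⟨k, hk⟩ := hcov S hS hSp' (⟨i, hi⟩, true)
        exact ⟨Sum.inl k, fun x hx hxS => hk x (by simp [Q1, hx, h x hxS]) hxS⟩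
      · obtain ⟨k, hk⟩ := hcov S hS hSp' (⟨i, hi⟩, false)
        exact ⟨Sum.inl k, fun x hx hxS => hk x (by simp [Q1, hx, h x hxS]) hxS⟩
    · exact ⟨Sum.inr ⟨i, hi⟩, fun x hx _ => hx⟩

lemma PP_B (n : ℕ) (hn : 1 ≤ n) (c c' : ℝ) (hc0 : 0 ≤ c)
    (hc : n + c * (2 / 3 : ℝ) ^ (1 / (n : ℝ)) ≤ c) (hc0' : 0 ≤ c')
    (hc' : c' + c * (4 : ℝ) ^ (1 / (n : ℝ)) ≤ c' * (2 : ℝ) ^ (1 / (n : ℝ)))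
    (X : Finset (Fin n → ℝ)) (hX : X.Nonempty) (j : ℕ) :
    ∃ p : MvPolynomial (Fin n) ℝ, p ≠ 0 ∧
      (p.totalDegree : ℝ) ≤ c' * ((2 : ℝ) ^ (1 / (n : ℝ))) ^ j ∧
      ∃ (κ : Type) (_ : Fintype κ) (Q : κ → Finset (Fin n → ℝ)),
        ∑ k, #(Q k) ≤ #X ∧ (∀ k, (#(Q k) : ℝ) ≤ #X / 2 ^ j) ∧
        ∀ S : Set (Fin n → ℝ), IsPreconnected S → (∀ x ∈ S, MvPolynomial.eval x p ≠ 0) →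
          ∃ k, ∀ x ∈ X, x ∈ S → x ∈ Q k := by
  have hXpos : (0 : ℝ) < #X := by exact_mod_cast hX.card_pos
  induction j with
  | zero =>
    exact ⟨1, one_ne_zero, by simpa using hc0', Unit, inferInstance, fun _ => X, by simp, by simp,
      fun S _ _ => ⟨(), fun x hx _ => hx⟩⟩
  | succ j ih =>
    obtain ⟨p, hp0, hpd, κ, _, Q, hs, hb, hcov⟩ := ih
    obtain ⟨q, hq0, hqd, κ', i', Q', hs', hb', hcov'⟩ := PP_A n hn c hc0 hc (#X / 2 ^ (j + 1))
      (by positivity) _ κ Q rfl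
    refine ⟨p * q, mul_ne_zero hp0 hq0, ?_, κ', i', Q', hs'.trans hs, hb', ?_⟩
    · have h1 : ((∑ i, #(Q i) ^ 2 : ℕ) : ℝ) / (#X / 2 ^ (j + 1)) ^ 2 ≤ 4 * 2 ^ j := by
        rw [div_le_iff₀ (by positivity)]
        calc ((∑ i, #(Q i) ^ 2 : ℕ) : ℝ) = ∑ i, (#(Q i) : ℝ) * #(Q i) := by
              push_cast; simp only [sq]
          _ ≤ ∑ i, (#(Q i) : ℝ) * (#X / 2 ^ j) := sum_le_sum (fun i _ => by gcongr; exact hb i)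
          _ = (∑ i, #(Q i) : ℕ) * (#X / 2 ^ j : ℝ) := by push_cast; rw [sum_mul]
          _ ≤ (#X : ℝ) * (#X / 2 ^ j : ℝ) := by gcongr
          _ = _ := by field_simp; ring
      have h2 := Real.rpow_le_rpow (by positivity) h1 (by positivity : (0 : ℝ) ≤ 1 / (n : ℝ))
      rw [Real.mul_rpow (by positivity) (by positivity)] at h2
      have h3 : ((2 : ℝ) ^ j) ^ (1 / (n : ℝ)) = ((2 : ℝ) ^ (1 / (n : ℝ))) ^ j := by
        rw [← Real.rpow_natCast, ← Real.rpow_natCast, ← Real.rpow_mul (by norm_num),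
          ← Real.rpow_mul (by norm_num), mul_comm]
      rw [h3] at h2
      have h5 : ((p * q).totalDegree : ℝ) ≤ p.totalDegree + q.totalDegree := by
        exact_mod_cast MvPolynomial.totalDegree_mul p q
      have h7 := mul_le_mul_of_nonneg_left h2 hc0
      have h9 := mul_le_mul_of_nonneg_right hc'
        (by positivity : (0 : ℝ) ≤ ((2 : ℝ) ^ (1 / (n : ℝ))) ^ j)
      rw [pow_succ]
      linarith
    · intro S hS hSp
      obtain ⟨k, hk⟩ := hcov S hS (fun x hx h0 => hSp x hx (by simp [h0]))
      obtain ⟨k', hk'⟩ := hcov' S hS (fun x hx h0 => hSp x hx (by simp [h0])) k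
      exact ⟨k', fun x hx hxS => hk' x (hk x hx hxS) hxS⟩

/-- **Guth–Katz polynomial partitioning for points.**
For every `n ≥ 1` there is a constant `C > 0` such that for every finite point set `X ⊆ ℝⁿ`
and every integer `D ≥ 1` there is a non-zero polynomial `p` of total degree at most `D`
such that every connected component of `ℝⁿ \ Z(p)` contains at most `C · D⁻ⁿ · |X|` points
of `X`. -/
theorem polynomial_partitioning_points (n : ℕ) (hn : 1 ≤ n) :
    ∃ C : ℝ, 0 < C ∧
      ∀ (X : Finset (Fin n → ℝ)) (D : ℕ), 1 ≤ D →
        ∃ p : MvPolynomial (Fin n) ℝ, p ≠ 0 ∧ p.totalDegree ≤ D ∧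
          ∀ x : Fin n → ℝ, MvPolynomial.eval x p ≠ 0 →
            (((X : Set (Fin n → ℝ)) ∩
                connectedComponentIn {y : Fin n → ℝ | MvPolynomial.eval y p ≠ 0} x).ncard : ℝ) ≤
              C * ((D : ℝ) ^ n)⁻¹ * X.card := by
  set θ : ℝ := (2 : ℝ) ^ (1 / (n : ℝ)) with hθ
  set η : ℝ := (2 / 3 : ℝ) ^ (1 / (n : ℝ)) with hη
  have hnr : (0 : ℝ) < 1 / (n : ℝ) := by positivity
  have hn0 : (n : ℝ) ≠ 0 := by positivity
  have hθ1 : 1 < θ := Real.one_lt_rpow (by norm_num) hnr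
  have hη1 : η < 1 := Real.rpow_lt_one (by norm_num) (by norm_num) hnr
  have hη' : 0 < 1 - η := by linarith
  have hθ' : 0 < θ - 1 := by linarith
  set c : ℝ := n / (1 - η) with hc
  have hc0 : 0 ≤ c := by positivity
  have hc1 : n + c * η ≤ c := by
    have : c * (1 - η) = n := by rw [hc]; field_simp
    linarith
  set c' : ℝ := c * (4 : ℝ) ^ (1 / (n : ℝ)) / (θ - 1) + 1 with hc'
  have hc0' : 0 < c' := by positivity
  have hc1' : c' + c * (4 : ℝ) ^ (1 / (n : ℝ)) ≤ c' * θ := by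
    have : c' * (θ - 1) = c * (4 : ℝ) ^ (1 / (n : ℝ)) + (θ - 1) := by rw [hc']; field_simp
    linarith
  refine ⟨2 * c' ^ n, by positivity, fun X D hD => ?_⟩
  have hDpos : (0 : ℝ) < D := by exact_mod_cast hD
  by_cases hcD : c' ≤ D
  swap
  · refine ⟨1, one_ne_zero, by simp, fun x _ => ?_⟩
    have h1 : ((X : Set (Fin n → ℝ)) ∩
        connectedComponentIn {y : Fin n → ℝ | MvPolynomial.eval y (1 : MvPolynomial (Fin n) ℝ) ≠ 0} x).ncard
        ≤ X.card := by
      rw [← Set.ncard_coe_finset X]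
      exact Set.ncard_le_ncard Set.inter_subset_left (Finset.finite_toSet X)
    have h2 : (D : ℝ) ^ n ≤ c' ^ n := pow_le_pow_left₀ hDpos.le (not_le.mp hcD).le n
    have h3 : (1 : ℝ) ≤ 2 * c' ^ n * ((D : ℝ) ^ n)⁻¹ := by
      rw [← div_eq_mul_inv, le_div_iff₀ (by positivity)]
      have : 0 < c' ^ n := by positivity
      linarith
    calc _ ≤ (X.card : ℝ) := by exact_mod_cast h1
      _ = 1 * X.card := by ring
      _ ≤ _ := by gcongr
  rcases X.eq_empty_or_nonempty with rfl | hX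
  · exact ⟨1, one_ne_zero, by simp, fun x _ => by simp⟩
  obtain ⟨j, hj1, hj2⟩ := exists_nat_pow_near (x := (D : ℝ) / c') (y := θ)
    (by rwa [le_div_iff₀ hc0', one_mul]) hθ1
  obtain ⟨p, hp0, hpd, κ, _, Q, hs, hb, hcov⟩ := PP_B n hn c c' hc0 hc1 hc0'.le hc1' X hX j
  refine ⟨p, hp0, ?_, fun x hx => ?_⟩
  · rw [le_div_iff₀ hc0'] at hj1
    have : (p.totalDegree : ℝ) ≤ D := by linarith
    exact_mod_cast this
  · obtain ⟨k, hk⟩ := hcov _ (isPreconnected_connectedComponentIn (F := {y : Fin n → ℝ | MvPolynomial.eval y p ≠ 0}) (x := x))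
      (fun y hy => connectedComponentIn_subset _ _ hy)
    have h1 : ((X : Set (Fin n → ℝ)) ∩
        connectedComponentIn {y : Fin n → ℝ | MvPolynomial.eval y p ≠ 0} x).ncard
        ≤ (Q k).card := by
      rw [← Set.ncard_coe_finset (Q k)]
      exact Set.ncard_le_ncard (fun y hy => hk y hy.1 hy.2) (Finset.finite_toSet _)
    have hθn : θ ^ n = 2 := by
      rw [hθ, ← Real.rpow_natCast, ← Real.rpow_mul (by norm_num), one_div_mul_cancel hn0,
        Real.rpow_one]
    have h2 : (D : ℝ) ^ n ≤ c' ^ n * (2 ^ j * 2) := by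
      rw [div_lt_iff₀ hc0'] at hj2
      calc (D : ℝ) ^ n ≤ (θ ^ (j + 1) * c') ^ n := pow_le_pow_left₀ hDpos.le hj2.le n
        _ = c' ^ n * (θ ^ n) ^ (j + 1) := by rw [mul_pow, ← pow_mul, ← pow_mul]; ring
        _ = _ := by rw [hθn, pow_succ]
    calc _ ≤ ((Q k).card : ℝ) := by exact_mod_cast h1
      _ ≤ X.card / 2 ^ j := hb k
      _ ≤ _ := by
        rw [div_le_iff₀ (by positivity)]
        have : (1 : ℝ) ≤ 2 * c' ^ n * ((D : ℝ) ^ n)⁻¹ * 2 ^ j := by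
          rw [mul_right_comm, ← div_eq_mul_inv, le_div_iff₀ (by positivity)]
          linarith
        have h3 : (0 : ℝ) ≤ X.card := by positivity
        nlinarith
end

section
/- Let n ≥ 1 and j ≥ 1 be integers and set C_n = 2^(n+1)·n! / (2^(1/n) − 1)^n. For any finite sets X₁,…,X_j of points in ℝ^n and any integer D ≥ 1, there exists a non-zero polynomial p ∈ ℝ[X₁,…,X_n] of total degree at most D such that for every 1 ≤ i ≤ j, every connected component of ℝ^n \ Z(p) contains at most C_n · j · D^(−n) · |X_i| points of X_i. -/
namespace PP

abbrev Ch (V : Type*) := List V →₀ ZMod 2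

noncomputable section

def cone {V : Type*} (b : V) : Ch V →ₗ[ZMod 2] Ch V :=
  Finsupp.lmapDomain (ZMod 2) (ZMod 2) (List.cons b)

def lmp {V W : Type*} (f : V → W) : Ch V →ₗ[ZMod 2] Ch W :=
  Finsupp.lmapDomain (ZMod 2) (ZMod 2) (List.map f)

def bdL {V : Type*} : List V → Ch V
  | [] => 0
  | a :: l => Finsupp.single l 1 + cone a (bdL l)

def bd {V : Type*} : Ch V →ₗ[ZMod 2] Ch V := Finsupp.linearCombination (ZMod 2) bdL

def sp {V : Type*} (s : Set (List V)) : Submodule (ZMod 2) (Ch V) :=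
  Finsupp.supported (ZMod 2) (ZMod 2) s

lemma cone_single {V : Type*} (b : V) (l : List V) :
    cone b (Finsupp.single l 1) = Finsupp.single (b :: l) 1 := by
  simp [cone]

lemma lmp_single {V W : Type*} (f : V → W) (l : List V) :
    lmp f (Finsupp.single l 1) = Finsupp.single (l.map f) 1 := by
  simp [lmp]

lemma bd_single {V : Type*} (l : List V) : bd (Finsupp.single l 1) = bdL l := by
  simp [bd]

lemma two_ch {V : Type*} (c : Ch V) : c + c = 0 := by
  ext l; simp [CharTwo.add_self_eq_zero]

lemma hom_ext {V M : Type*} [AddCommMonoid M] [Module (ZMod 2) M] {f g : Ch V →ₗ[ZMod 2] M}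
    (h : ∀ l, f (Finsupp.single l 1) = g (Finsupp.single l 1)) : f = g := by
  apply Finsupp.lhom_ext'
  intro l
  ext
  simpa using h l

lemma single_mem_sp {V : Type*} {s : Set (List V)} {l : List V} (h : l ∈ s) :
    (Finsupp.single l 1 : Ch V) ∈ sp s := Finsupp.single_mem_supported _ _ h

lemma sp_map {V M : Type*} [AddCommMonoid M] [Module (ZMod 2) M] {s : Set (List V)}
    (φ : Ch V →ₗ[ZMod 2] M)
    (W : Submodule (ZMod 2) M) (h : ∀ l ∈ s, φ (Finsupp.single l 1) ∈ W) {c : Ch V}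
    (hc : c ∈ sp s) : φ c ∈ W := by
  have : sp s ≤ W.comap φ := by
    rw [sp, Finsupp.supported_eq_span_single, Submodule.span_le]
    rintro _ ⟨l, hl, rfl⟩
    exact h l hl
  exact this hc

lemma sp_eq {V M : Type*} [AddCommMonoid M] [Module (ZMod 2) M] {s : Set (List V)}
    (φ ψ : Ch V →ₗ[ZMod 2] M)
    (h : ∀ l ∈ s, φ (Finsupp.single l 1) = ψ (Finsupp.single l 1)) {c : Ch V}
    (hc : c ∈ sp s) : φ c = ψ c := by
  have : c ∈ LinearMap.eqLocus φ ψ := by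
    refine sp_map LinearMap.id (LinearMap.eqLocus φ ψ) ?_ hc
    intro l hl
    exact h l hl
  exact this

lemma sp_mono {V : Type*} {s t : Set (List V)} (h : s ⊆ t) {c : Ch V} (hc : c ∈ sp s) :
    c ∈ sp t := Finsupp.supported_mono h hc

lemma cone_mem {V : Type*} {s t : Set (List V)} (b : V) (h : ∀ l ∈ s, b :: l ∈ t) {c : Ch V}
    (hc : c ∈ sp s) : cone b c ∈ sp t := by
  refine sp_map _ _ ?_ hc
  intro l hl
  rw [cone_single]
  exact single_mem_sp (h l hl)

lemma bd_cone {V : Type*} (b : V) (c : Ch V) : bd (cone b c) = c + cone b (bd c) := by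
  have : (bd ∘ₗ cone b : Ch V →ₗ[ZMod 2] Ch V) = LinearMap.id + cone b ∘ₗ bd := by
    apply hom_ext
    intro l
    simp [cone_single, bd_single, bdL]
  exact LinearMap.congr_fun this c

lemma bd_bd {V : Type*} (c : Ch V) : bd (bd c) = 0 := by
  have : (bd ∘ₗ bd : Ch V →ₗ[ZMod 2] Ch V) = 0 := by
    apply hom_ext
    intro l
    induction l with
    | nil => simp [bd_single, bdL]
    | cons a l ih =>
      simp only [LinearMap.comp_apply, bd_single, bdL, map_add, bd_cone, LinearMap.zero_apply] at ih ⊢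
      rw [ih, map_zero, add_zero, two_ch]
  exact LinearMap.congr_fun this c

lemma lmp_cone {V W : Type*} (f : V → W) (b : V) (c : Ch V) :
    lmp f (cone b c) = cone (f b) (lmp f c) := by
  have : (lmp f ∘ₗ cone b : Ch V →ₗ[ZMod 2] Ch W) = cone (f b) ∘ₗ lmp f := by
    apply hom_ext
    intro l
    simp [cone_single, lmp_single]
  exact LinearMap.congr_fun this c

lemma lmp_bd {V W : Type*} (f : V → W) (c : Ch V) : lmp f (bd c) = bd (lmp f c) := by
  have : (lmp f ∘ₗ bd : Ch V →ₗ[ZMod 2] Ch W) = bd ∘ₗ lmp f := by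
    apply hom_ext
    intro l
    simp only [LinearMap.comp_apply, lmp_single, bd_single]
    induction l with
    | nil => simp [bdL]
    | cons a l ih => simp [bdL, lmp_single, lmp_cone, ih]
  exact LinearMap.congr_fun this c

/-- facets are sublists with one fewer element -/
lemma bdL_mem {V : Type*} (l : List V) :
    bdL l ∈ sp {l' : List V | l'.Sublist l ∧ l'.length + 1 = l.length} := by
  induction l with
  | nil => simp [bdL]
  | cons a l ih =>
    refine Submodule.add_mem _ (single_mem_sp ⟨List.sublist_cons_self a l, rfl⟩) ?_
    refine cone_mem a ?_ ih
    rintro l' ⟨h1, h2⟩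
    exact ⟨h1.cons_cons a, by simp [h2]⟩

/-! ### alternation cochains -/

def alt : Bool → List ℕ → ZMod 2
  | _, [] => 1
  | s, a :: l => if decide (a % 2 = 0) = s then alt (!s) l else 0

def ev {V : Type*} (G : List V → ZMod 2) : Ch V →ₗ[ZMod 2] ZMod 2 :=
  Finsupp.linearCombination (ZMod 2) G

lemma ev_single {V : Type*} (G : List V → ZMod 2) (l : List V) :
    ev G (Finsupp.single l 1) = G l := by simp [ev]

lemma ev_cone {V : Type*} (G : List V → ZMod 2) (b : V) (c : Ch V) :
    ev G (cone b c) = ev (fun l => G (b :: l)) c := by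
  have : (ev G ∘ₗ cone b) = ev (fun l => G (b :: l)) := by
    apply hom_ext
    intro l
    simp [cone_single, ev_single]
  exact LinearMap.congr_fun this c

lemma ev_zero {V : Type*} (c : Ch V) : ev (fun _ => 0) c = 0 := by
  have : (ev (fun _ : List V => 0)) = 0 := by
    apply hom_ext
    intro l
    simp [ev_single]
  rw [this]; rfl

lemma alt_bd (l : List ℕ) : ∀ s, ev (alt s) (bdL l) = alt s l + alt (!s) l := by
  induction l with
  | nil => intro s; simp [bdL, alt]; decide
  | cons a l ih =>
    intro s
    simp only [bdL, map_add, ev_single, ev_cone, alt]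
    by_cases h : decide (a % 2 = 0) = s
    · have h' : ¬ (decide (a % 2 = 0) = !s) := by rw [h]; cases s <;> simp
      simp only [h, h', if_true, if_false]
      have := ih (!s)
      simp only [Bool.not_not] at this
      rw [if_neg (by cases s <;> simp)]
      rw [show ev (fun l => alt (!s) l) (bdL l) = _ from this]
      rw [add_comm (alt (!s) l), ← add_assoc, CharTwo.add_self_eq_zero, zero_add, add_zero]
    · have h' : (decide (a % 2 = 0) = !s) := by cases s <;> simp_all
      simp only [h, h', if_true, if_false, Bool.not_not]
      rw [if_neg (by cases s <;> simp)]
      simp [ev_zero]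

lemma ev_bd_perm {V : Type*} {l l' : List V} (h : l.Perm l') :
    ∀ G : List V → ZMod 2, (∀ a b, a.Perm b → G a = G b) → ev G (bdL l) = ev G (bdL l') := by
  induction h with
  | nil => intros; rfl
  | cons x h ih =>
    intro G hG
    simp only [bdL, map_add, ev_single, ev_cone]
    rw [hG _ _ h, ih (fun l => G (x :: l)) (fun a b hab => hG _ _ (hab.cons x))]
  | swap x y l =>
    intro G hG
    simp only [bdL, map_add, ev_single, ev_cone, cone_single]
    have : (fun l => G (y :: x :: l)) = (fun l => G (x :: y :: l)) := by
      funext l; exact hG _ _ (List.Perm.swap x y l)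
    rw [this]
    ring
  | trans _ _ ih1 ih2 =>
    intro G hG
    rw [ih1 G hG, ih2 G hG]

def srt (l : List ℕ) : List ℕ := l.insertionSort (· ≤ ·)

lemma srt_perm (l : List ℕ) : (srt l).Perm l := List.perm_insertionSort _ _
lemma srt_sorted (l : List ℕ) : (srt l).Pairwise (· ≤ ·) := List.pairwise_insertionSort _ _
lemma srt_uniq {l l' : List ℕ} (h : l.Perm l') (h' : l'.Pairwise (· ≤ ·)) : srt l = l' := 
  List.Perm.eq_of_pairwise (by intros; omega) (srt_sorted l) h' ((srt_perm l).trans h)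

def F (s : Bool) (l : List ℕ) : ZMod 2 := alt s (srt l)

lemma F_bd (s : Bool) (c : Ch ℕ) : ev (F s) (bd c) = ev (F s) c + ev (F (!s)) c := by
  have : (ev (F s) ∘ₗ bd) = ev (F s) + ev (F (!s)) := by
    apply hom_ext
    intro l
    simp only [LinearMap.comp_apply, bd_single, LinearMap.add_apply, ev_single]
    rw [ev_bd_perm (srt_perm l).symm]
    · rw [F, F, ← alt_bd]
      refine sp_eq _ _ ?_ (bdL_mem _)
      rintro l' ⟨h1, -⟩
      rw [ev_single, ev_single, F, srt_uniq (List.Perm.refl _) ((srt_sorted l).sublist h1)]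
    · intro a b hab
      rw [F, F, srt_uniq (hab.trans (srt_perm b).symm) (srt_sorted b)]
  exact LinearMap.congr_fun this c

def flip (a : ℕ) : ℕ := if a % 2 = 0 then a + 1 else a - 1

def NC (l : List ℕ) : Prop := ∀ a ∈ l, ∀ b ∈ l, a / 2 = b / 2 → a = b

lemma alt_flip (l : List ℕ) : ∀ s, alt s (l.map flip) = alt (!s) l := by
  induction l with
  | nil => intro s; simp [alt]
  | cons a l ih =>
    intro s
    simp only [List.map_cons, alt, ih, flip]
    rcases Nat.mod_two_eq_zero_or_one a with h | h
    · have : (a + 1) % 2 = 1 := by omega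
      cases s <;> simp [h, this]
    · have : (a - 1) % 2 = 0 := by omega
      cases s <;> simp [h, this]

lemma F_flip (s : Bool) (l : List ℕ) (h : NC l) : F s (l.map flip) = F (!s) l := by
  rw [F, F, ← alt_flip, srt_uniq ((srt_perm l).symm.map flip)]
  rw [List.pairwise_map]
  refine List.Pairwise.imp_of_mem ?_ (srt_sorted l)
  intro a b ha hb hab
  have := h a ((srt_perm l).mem_iff.1 ha) b ((srt_perm l).mem_iff.1 hb)
  unfold flip
  split_ifs <;> omega

lemma alt_chain (l : List ℕ) : ∀ s, alt s l ≠ 0 → l.IsChain (fun a b => a % 2 ≠ b % 2) := by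
  induction l with
  | nil => intros; simp
  | cons a l ih =>
    intro s h
    simp only [alt] at h
    split_ifs at h with h1
    · have := ih _ h
      cases l with
      | nil => simp
      | cons b l =>
        rw [List.isChain_cons_cons]
        refine ⟨?_, this⟩
        simp only [alt] at h
        split_ifs at h with h2
        · intro h3
          rw [h3] at h1
          rw [h1] at h2
          cases s <;> simp at h2
        · simp at h
    · simp at h

lemma F_vanish (s : Bool) (l : List ℕ) (h : NC l) (m : ℕ) (hm : ∀ a ∈ l, a < 2 * m)
    (hl : m < l.length) : F s l = 0 := by
  by_contra hne
  have h1 := alt_chain _ _ hne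
  have h2 := srt_sorted l
  have h4 : (srt l).IsChain (fun a b => a ≤ b) := h2.isChain
  have h3 : ((srt l).map (fun a => a / 2)).IsChain (· < ·) := by
    rw [List.isChain_map]
    rw [List.isChain_iff_getElem] at h1 h4 ⊢
    intro i hi
    have e1 := h1 i hi
    have e2 := h4 i hi
    have e3 := h _ ((srt_perm l).mem_iff.1 (List.getElem_mem (Nat.lt_of_succ_lt hi))) _
      ((srt_perm l).mem_iff.1 (List.getElem_mem hi))
    by_contra hc
    have : (srt l)[i] = (srt l)[i+1] := e3 (by omega)
    rw [this] at e1
    exact e1 rfl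
  have h5 : ((srt l).map (fun a => a / 2)).Nodup := by
    have := (List.isChain_iff_pairwise).1 h3
    exact this.imp (fun h => by omega)
  have h6 := List.toFinset_card_of_nodup h5
  have h7 : ((srt l).map (fun a => a / 2)).toFinset ⊆ Finset.range m := by
    intro x hx
    simp only [List.mem_toFinset, List.mem_map] at hx
    obtain ⟨a, ha, rfl⟩ := hx
    have := hm a ((srt_perm l).mem_iff.1 ha)
    simp only [Finset.mem_range]
    omega
  have h8 := Finset.card_le_card h7
  rw [h6, List.length_map, (srt_perm l).length_eq, Finset.card_range] at h8
  omega

end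

end PP

namespace PP

noncomputable section

section sub
variable {V : Type*} [AddCommGroup V] [Module ℝ V]

def bary (l : List V) : V := ((l.length : ℝ)⁻¹) • l.sum

def S : ℕ → (Ch V →ₗ[ZMod 2] Ch V)
  | 0 => LinearMap.id
  | n + 1 => Finsupp.linearCombination (ZMod 2) (fun l => cone (bary l) (S n (bdL l)))

lemma S_succ_single (n : ℕ) (l : List V) :
    S (n + 1) (Finsupp.single l 1) = cone (bary l) (S n (bdL l)) := by simp [S]

abbrev T : Ch V →ₗ[ZMod 2] Ch V := lmp (fun v => -v)

lemma sum_map_neg' (l : List V) : (l.map (fun v => -v)).sum = - l.sum := by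
  induction l with
  | nil => simp
  | cons a l ih => simp [ih, add_comm]

lemma bary_neg (l : List V) : bary (l.map (fun v => -v)) = - bary l := by
  simp [bary, sum_map_neg']

lemma S_T (n : ℕ) : ∀ c : Ch V, T (S n c) = S n (T c) := by
  induction n with
  | zero => intro c; rfl
  | succ n ih =>
    intro c
    have : (T ∘ₗ S (n + 1) : Ch V →ₗ[ZMod 2] Ch V) = S (n + 1) ∘ₗ T := by
      apply hom_ext
      intro l
      simp only [LinearMap.comp_apply, S_succ_single, lmp_single, lmp_cone, ih, bary_neg]
      rw [← bd_single, lmp_bd, lmp_single, bd_single]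
    exact LinearMap.congr_fun this c

/-- bound for the barycenter in convex sets -/
lemma bary_mem {A : Set V} (hA : Convex ℝ A) (l : List V) (hl : l ≠ []) (h : ∀ v ∈ l, v ∈ A) :
    bary l ∈ A := by
  have hlen : 0 < l.length := List.length_pos_iff.2 hl
  have h1 : l.sum = ∑ i : Fin l.length, l[i] := by
    simp
  have := hA.sum_mem (t := Finset.univ) (w := fun _ : Fin l.length => (l.length : ℝ)⁻¹)
    (z := fun i => l[i]) (by intros; positivity)
    (by simp; field_simp) (by intro i _; exact h _ (List.getElem_mem _))
  rw [bary, h1, Finset.smul_sum]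
  exact this

end sub

section geo
variable {V : Type*} [NormedAddCommGroup V] [NormedSpace ℝ V]

lemma sum_dist_le (l : List V) (d : ℝ) (x : V) (h : ∀ y ∈ l, ‖y - x‖ ≤ d) :
    ‖l.sum - (l.length : ℝ) • x‖ ≤ l.length * d := by
  induction l with
  | nil => simp
  | cons a l ih =>
    have h1 := ih (fun y hy => h y (List.mem_cons_of_mem _ hy))
    have h2 := h a List.mem_cons_self
    have : (a :: l).sum - ((a :: l).length : ℝ) • x
        = (a - x) + (l.sum - (l.length : ℝ) • x) := by
      simp only [List.sum_cons, List.length_cons, Nat.cast_add, Nat.cast_one, add_smul, one_smul]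
      abel
    rw [this]
    refine (norm_add_le _ _).trans ?_
    simp only [List.length_cons, Nat.cast_add, Nat.cast_one]
    linarith

lemma sum_dist_le' (l : List V) (d : ℝ) (x : V) (hx : x ∈ l) (h : ∀ y ∈ l, ‖y - x‖ ≤ d) :
    ‖l.sum - (l.length : ℝ) • x‖ ≤ (l.length - 1) * d := by
  classical
  have hp := List.perm_cons_erase hx
  have h1 := sum_dist_le (l.erase x) d x (fun y hy => h y (List.mem_of_mem_erase hy))
  rw [hp.sum_eq, hp.length_eq]
  simp only [List.sum_cons, List.length_cons, Nat.cast_add, Nat.cast_one, add_smul, one_smul]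
  have : x + (l.erase x).sum - (((l.erase x).length : ℝ) • x + x)
    = (l.erase x).sum - ((l.erase x).length : ℝ) • x := by abel
  rw [this]
  simpa using h1

lemma bary_dist (l : List V) (d : ℝ) (hd : 0 ≤ d) (m : ℕ) (hm : l.length ≤ m + 1)
    (x : V) (hx : x ∈ l) (h : ∀ y ∈ l, ‖y - x‖ ≤ d) : ‖bary l - x‖ ≤ (m / (m + 1) : ℝ) * d := by
  have hlen : 0 < l.length := List.length_pos_of_mem hx
  have hlen' : (0 : ℝ) < l.length := by exact_mod_cast hlen
  have h1 := sum_dist_le' l d x hx h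
  have : bary l - x = ((l.length : ℝ)⁻¹) • (l.sum - (l.length : ℝ) • x) := by
    rw [bary, smul_sub, smul_smul, inv_mul_cancel₀ hlen'.ne', one_smul]
  rw [this, norm_smul, norm_inv, Real.norm_of_nonneg hlen'.le, inv_mul_le_iff₀ hlen']
  refine h1.trans ?_
  rw [← mul_assoc]
  refine mul_le_mul_of_nonneg_right ?_ hd
  have hm' : (l.length : ℝ) ≤ m + 1 := by exact_mod_cast hm
  rw [mul_div_assoc', le_div_iff₀ (by positivity)]
  nlinarith

def Diam (d : ℝ) (l : List V) : Prop := ∀ x ∈ l, ∀ y ∈ l, ‖x - y‖ ≤ d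

def Hull (l l' : List V) : Prop := ∀ A : Set V, Convex ℝ A → (∀ v ∈ l, v ∈ A) → ∀ v ∈ l', v ∈ A

lemma S_mem (m : ℕ) (d : ℝ) (hd : 0 ≤ d) (n : ℕ) : ∀ (l : List V), l.length = n → n ≤ m + 1 →
    Diam d l → S n (Finsupp.single l 1) ∈
      sp {l' | l'.length = n ∧ Hull l l' ∧ Diam ((m / (m + 1) : ℝ) * d) l'} := by
  induction n with
  | zero =>
    intro l hl _ _
    rw [List.length_eq_zero_iff] at hl
    subst hl
    refine single_mem_sp ⟨rfl, fun A _ h => h, ?_⟩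
    intro x hx
    simp at hx
  | succ n ih =>
    intro l hl hn hdl
    rw [S_succ_single]
    have hne : l ≠ [] := by rintro rfl; simp at hl
    refine cone_mem (s := {l' | l'.length = n ∧ Hull l l' ∧ Diam ((m / (m + 1) : ℝ) * d) l'})
      _ ?_ ?_
    · rintro l' ⟨h1, h2, h3⟩
      refine ⟨by simp [h1], ?_, ?_⟩
      · intro A hA hlA v hv
        rcases List.mem_cons.1 hv with rfl | hv
        · exact bary_mem hA l hne hlA
        · exact h2 A hA hlA v hv
      · have key : ∀ v ∈ l', ‖v - bary l‖ ≤ (m / (m + 1) : ℝ) * d := by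
          intro v hv
          have := h2 (Metric.closedBall (bary l) ((m / (m + 1) : ℝ) * d)) (convex_closedBall _ _)
            ?_ v hv
          · rwa [mem_closedBall_iff_norm] at this
          · intro x hx
            rw [mem_closedBall_iff_norm, norm_sub_rev]
            exact bary_dist l d hd m (by omega) x hx (fun y hy => hdl y hy x hx)
        intro x hx y hy
        rcases List.mem_cons.1 hx with rfl | hx <;> rcases List.mem_cons.1 hy with rfl | hy
        · simp; positivity
        · rw [norm_sub_rev]; exact key y hy
        · exact key x hx
        · exact h3 x hx y hy
    · refine sp_map (S n) _ ?_ (bdL_mem l)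
      rintro l0 ⟨h1, h2⟩
      refine sp_mono ?_ (ih l0 (by omega) (by omega)
        (fun x hx y hy => hdl x (h1.subset hx) y (h1.subset hy)))
      rintro l' ⟨g1, g2, g3⟩
      exact ⟨g1, fun A hA h => g2 A hA (fun v hv => h v (h1.subset hv)), g3⟩

lemma S_len (n : ℕ) (l : List V) (hl : l.length = n) :
    S n (Finsupp.single l 1) ∈ sp {l' : List V | l'.length = n} := by
  induction n generalizing l with
  | zero => exact single_mem_sp hl
  | succ n ih =>
    rw [S_succ_single]
    refine cone_mem (s := {l' | l'.length = n}) _ ?_ ?_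
    · intro l' h; simpa using h
    · refine sp_map (S n) _ ?_ (bdL_mem l)
      rintro l0 ⟨h1, h2⟩
      exact ih l0 (by omega)

lemma S_len' (n : ℕ) {c : Ch V} (hc : c ∈ sp {l : List V | l.length = n}) :
    S n c ∈ sp {l' : List V | l'.length = n} :=
  sp_map _ _ (fun l hl => S_len n l hl) hc

lemma bd_len (n : ℕ) {c : Ch V} (hc : c ∈ sp {l : List V | l.length = n + 1}) :
    bd c ∈ sp {l' : List V | l'.length = n} := by
  refine sp_map _ _ ?_ hc
  intro l hl
  rw [bd_single]
  refine sp_mono ?_ (bdL_mem l)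
  rintro l' ⟨_, h2⟩
  have : l.length = n + 1 := hl
  show l'.length = n
  omega

lemma S_zero (c : Ch V) : S 0 c = c := rfl

lemma bd_S (n : ℕ) : ∀ {c : Ch V}, c ∈ sp {l : List V | l.length = n + 1} →
    bd (S (n + 1) c) = S n (bd c) := by
  induction n with
  | zero =>
    intro c hc
    rw [← LinearMap.comp_apply, ← LinearMap.comp_apply]
    refine sp_eq _ _ ?_ hc
    intro l hl
    obtain ⟨v, rfl⟩ := List.length_eq_one_iff.1 hl
    rw [LinearMap.comp_apply, LinearMap.comp_apply, S_succ_single, bd_cone, bd_single, S_zero]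
    simp [bdL, bd_single]
  | succ n ih =>
    intro c hc
    rw [← LinearMap.comp_apply, ← LinearMap.comp_apply]
    refine sp_eq _ _ ?_ hc
    intro l hl
    have h1 : bd (Finsupp.single l 1 : Ch V) ∈ sp {l' : List V | l'.length = n + 1} :=
      bd_len _ (single_mem_sp hl)
    rw [LinearMap.comp_apply, LinearMap.comp_apply, S_succ_single (n + 1) l, bd_cone,
      ← bd_single, ih h1, bd_bd, map_zero, map_zero, add_zero]

/-- iterated subdivision -/
def It (n : ℕ) : ℕ → Ch V → Ch V
  | 0, c => c
  | N + 1, c => S n (It n N c)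

lemma It_len (n N : ℕ) {c : Ch V} (hc : c ∈ sp {l : List V | l.length = n}) :
    It n N c ∈ sp {l' : List V | l'.length = n} := by
  induction N with
  | zero => exact hc
  | succ N ih => exact S_len' n ih

lemma It_bd (n N : ℕ) {c : Ch V} (hc : c ∈ sp {l : List V | l.length = n + 1}) :
    bd (It (n + 1) N c) = It n N (bd c) := by
  induction N with
  | zero => rfl
  | succ N ih => simp only [It]; rw [bd_S n (It_len _ _ hc), ih]

lemma It_add (n N : ℕ) (c c' : Ch V) : It n N (c + c') = It n N c + It n N c' := by
  induction N with
  | zero => rfl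
  | succ N ih => simp only [It, ih, map_add]

lemma It_T (n N : ℕ) (c : Ch V) : It n N (T c) = T (It n N c) := by
  induction N with
  | zero => rfl
  | succ N ih => simp only [It, ih, S_T]

lemma It_zero (N : ℕ) (c : Ch V) : It 0 N c = c := by
  induction N with
  | zero => rfl
  | succ N ih => simp only [It, ih]; rfl

lemma It_mem (m n : ℕ) (hn : n ≤ m + 1) (Q : List V → Prop)
    (hQ : ∀ l l', Q l → Hull l l' → Q l') (d : ℝ) (hd : 0 ≤ d) {c : Ch V}
    (hc : c ∈ sp {l : List V | l.length = n ∧ Q l ∧ Diam d l}) (N : ℕ) :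
    It n N c ∈ sp {l : List V | l.length = n ∧ Q l ∧ Diam ((m / (m + 1) : ℝ) ^ N * d) l} := by
  induction N with
  | zero => simpa [It] using hc
  | succ N ih =>
    refine sp_map _ _ ?_ ih
    rintro l ⟨h1, h2, h3⟩
    refine sp_mono ?_ (S_mem m ((m / (m + 1) : ℝ) ^ N * d) (by positivity) n l h1 hn h3)
    rintro l' ⟨g1, g2, g3⟩
    refine ⟨g1, hQ _ _ h2 g2, ?_⟩
    rwa [pow_succ', mul_assoc]

end geo

section base
variable {V : Type*} [NormedAddCommGroup V] [NormedSpace ℝ V]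

def z (e : ℕ → V) : ℕ → Ch V
  | 0 => Finsupp.single [] 1
  | k + 1 => cone (e k) (z e k) + T (cone (e k) (z e k))

lemma T_T (c : Ch V) : T (T c) = c := by
  have : (T ∘ₗ T : Ch V →ₗ[ZMod 2] Ch V) = LinearMap.id := by
    apply hom_ext
    intro l
    simp [lmp_single]
  exact LinearMap.congr_fun this c

lemma T_z (e : ℕ → V) (k : ℕ) : T (z e k) = z e k := by
  cases k with
  | zero => simp [z, lmp_single]
  | succ k => simp only [z, map_add, T_T, add_comm]

lemma bd_z (e : ℕ → V) (k : ℕ) : bd (z e k) = 0 := by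
  induction k with
  | zero => simp [z, bd_single, bdL]
  | succ k ih =>
    simp only [z, map_add, ← lmp_bd]
    rw [bd_cone, ih, map_zero, add_zero, T_z, two_ch]

lemma bd_c (e : ℕ → V) (k : ℕ) : bd (cone (e k) (z e k)) = z e k := by
  rw [bd_cone, bd_z, map_zero, add_zero]

lemma T_mem {s t : Set (List V)} (h : ∀ l ∈ s, l.map (fun v => -v) ∈ t) {c : Ch V}
    (hc : c ∈ sp s) : T c ∈ sp t := by
  refine sp_map _ _ ?_ hc
  intro l hl
  rw [lmp_single]
  exact single_mem_sp (h l hl)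

/-- abstract Tucker-type lemma -/
lemma tucker_abs (r m : ℕ) (hm : m < r) (e : ℕ → V) (lab : V → ℕ) (N : ℕ)
    (hlab : ∀ k < r, It (k + 1) N (cone (e k) (z e k)) ∈ sp {l : List V | l.length = k + 1 ∧
       (∀ v ∈ l, lab (-v) = flip (lab v) ∧ lab v < 2 * m) ∧ NC (l.map lab)}) : False := by
  set Φ : Bool → Ch V →ₗ[ZMod 2] ZMod 2 := fun s => ev (F s) ∘ₗ lmp lab with hΦ
  have h1 : ∀ s (c : Ch V), Φ s (bd c) = Φ s c + Φ (!s) c := by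
    intro s c
    simp only [hΦ, LinearMap.comp_apply, lmp_bd, F_bd]
  have h2 : ∀ k < r, Φ true (T (It (k + 1) N (cone (e k) (z e k)))) =
      Φ false (It (k + 1) N (cone (e k) (z e k))) := by
    intro k hk
    refine sp_eq (Φ true ∘ₗ T) (Φ false) ?_ (hlab k hk)
    rintro l ⟨-, g1, g2⟩
    simp only [hΦ, LinearMap.comp_apply, lmp_single, ev_single]
    have : List.map lab (List.map (fun v => -v) l) = (l.map lab).map flip := by
      simp only [List.map_map, List.map_inj_left, Function.comp]
      exact fun v hv => (g1 v hv).1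
    rw [this, F_flip _ _ g2]
    rfl
  have h3 : ∀ k < r, Φ true (It (k + 1) N (z e (k + 1))) = Φ true (It k N (z e k)) := by
    intro k hk
    have hlen : cone (e k) (z e k) ∈ sp {l : List V | l.length = k + 1} := by
      have : ∀ k, z e k ∈ sp {l : List V | l.length = k} := by
        intro k
        induction k with
        | zero => exact single_mem_sp rfl
        | succ k ih =>
          have := cone_mem (t := {l : List V | l.length = k + 1}) (e k)
            (fun l (hl : l.length = k) => by simp [hl]) ih
          refine Submodule.add_mem _ this (T_mem ?_ this)
          intro l hl
          simpa using hl
      exact cone_mem (e k) (fun l (hl : l.length = k) => by simp [hl]) (this k)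
    rw [z, It_add, map_add, It_T, h2 k hk]
    have := h1 true (It (k + 1) N (cone (e k) (z e k)))
    rw [It_bd _ _ hlen, bd_c] at this
    exact this.symm
  have h4 : ∀ k ≤ r, Φ true (It k N (z e k)) = 1 := by
    intro k
    induction k with
    | zero =>
      intro _
      rw [It_zero]
      simp [z, hΦ, lmp_single, ev_single, F, srt, alt]
    | succ k ih =>
      intro hk
      rw [h3 k hk, ih (by omega)]
  obtain ⟨r, rfl⟩ : ∃ r', r = r' + 1 := ⟨r - 1, by omega⟩
  have h5 := h4 (r + 1) le_rfl
  rw [z, It_add, map_add, It_T, h2 r (by omega)] at h5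
  have h6 : ∀ s, Φ s (It (r + 1) N (cone (e r) (z e r))) = 0 := by
    intro s
    refine sp_eq (Φ s) 0 ?_ (hlab r (by omega))
    rintro l ⟨g0, g1, g2⟩
    simp only [hΦ, LinearMap.comp_apply, lmp_single, ev_single, LinearMap.zero_apply]
    refine F_vanish _ _ g2 m ?_ (by simp [g0, hm])
    intro a ha
    obtain ⟨v, hv, rfl⟩ := List.mem_map.1 ha
    exact (g1 v hv).2
  rw [h6, h6] at h5
  exact absurd h5 (by decide)

end base

end

end PP

namespace PP

noncomputable section

section ham
variable {r : ℕ}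

def Q (l : List (Fin r → ℝ)) : Prop :=
  (∀ i, (∀ v ∈ l, 0 ≤ v i) ∨ (∀ v ∈ l, v i ≤ 0)) ∧ ∀ v ∈ l, ∑ i, |v i| = 1

lemma Q_hull (l l' : List (Fin r → ℝ)) (h : Q l) (hh : Hull l l') : Q l' := by
  classical
  obtain ⟨h1, h2⟩ := h
  have : ∃ σ : Fin r → ℝ, (∀ i, (σ i = 1 ∨ σ i = -1) ∧ ∀ v ∈ l, 0 ≤ σ i * v i) := by
    have : ∀ i, ∃ s : ℝ, (s = 1 ∨ s = -1) ∧ ∀ v ∈ l, 0 ≤ s * v i := by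
      intro i
      rcases h1 i with h | h
      · exact ⟨1, Or.inl rfl, by simpa using h⟩
      · exact ⟨-1, Or.inr rfl, by simpa using h⟩
    choose σ hσ using this
    exact ⟨σ, hσ⟩
  obtain ⟨σ, hσ⟩ := this
  have habs : ∀ v : Fin r → ℝ, (∀ i, 0 ≤ σ i * v i) → ∀ i, |v i| = σ i * v i := by
    intro v hv i
    have h0 := hv i
    rcases (hσ i).1 with h | h <;> rw [h] at h0 ⊢
    · rw [abs_of_nonneg (by linarith)]; ring
    · rw [abs_of_nonpos (by linarith)]; ring
  have key := hh {v | (∀ i, 0 ≤ σ i * v i) ∧ ∑ i, σ i * v i = 1} ?_ ?_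
  · constructor
    · intro i
      rcases (hσ i).1 with h | h
      · left; intro v hv; have := (key v hv).1 i; rw [h] at this; linarith
      · right; intro v hv; have := (key v hv).1 i; rw [h] at this; linarith
    · intro v hv
      obtain ⟨k1, k2⟩ := key v hv
      rw [← k2]
      exact Finset.sum_congr rfl (fun i _ => habs v k1 i)
  · rintro x ⟨hx1, hx2⟩ y ⟨hy1, hy2⟩ a b ha hb hab
    have e : ∀ i, σ i * (a • x + b • y) i = a * (σ i * x i) + b * (σ i * y i) := by
      intro i; simp; ring
    refine ⟨?_, ?_⟩
    · intro i
      rw [e]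
      have := mul_nonneg ha (hx1 i)
      have := mul_nonneg hb (hy1 i)
      linarith
    · simp only [e, Finset.sum_add_distrib, ← Finset.mul_sum, hx2, hy2]
      linarith
  · intro v hv
    have k1 := fun i => (hσ i).2 v hv
    refine ⟨k1, ?_⟩
    rw [← h2 v hv]
    exact Finset.sum_congr rfl (fun i _ => (habs v k1 i).symm)

def e (r : ℕ) (k : ℕ) : Fin r → ℝ := fun i => if (i : ℕ) = k then 1 else 0

lemma Q_neg (l : List (Fin r → ℝ)) (h : Q l) : Q (l.map (fun v => -v)) := by
  obtain ⟨h1, h2⟩ := h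
  constructor
  · intro i
    rcases h1 i with h | h
    · right
      intro v hv
      obtain ⟨w, hw, rfl⟩ := List.mem_map.1 hv
      simpa using h w hw
    · left
      intro v hv
      obtain ⟨w, hw, rfl⟩ := List.mem_map.1 hv
      simpa using h w hw
  · intro v hv
    obtain ⟨w, hw, rfl⟩ := List.mem_map.1 hv
    simpa using h2 w hw

lemma cone_base (k : ℕ) (hk : k < r) {c : Ch (Fin r → ℝ)}
    (hc : c ∈ sp {l : List (Fin r → ℝ) | l.length = k ∧ Q l ∧
      ∀ v ∈ l, ∀ i : Fin r, k ≤ i → v i = 0}) :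
    cone (e r k) c ∈ sp {l : List (Fin r → ℝ) | l.length = k + 1 ∧ Q l ∧
      ∀ v ∈ l, ∀ i : Fin r, k + 1 ≤ i → v i = 0} := by
  refine cone_mem _ ?_ hc
  rintro l ⟨h0, ⟨h1, h2⟩, h3⟩
  refine ⟨by simp [h0], ⟨?_, ?_⟩, ?_⟩
  · intro i
    have he : 0 ≤ e r k i := by unfold e; split_ifs <;> simp
    by_cases hi : k ≤ i
    · left
      intro v hv
      rcases List.mem_cons.1 hv with rfl | hv
      · exact he
      · rw [h3 v hv i hi]
    · have he' : e r k i = 0 := by unfold e; rw [if_neg (by omega)]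
      rcases h1 i with h | h
      · left
        intro v hv
        rcases List.mem_cons.1 hv with rfl | hv
        · exact he
        · exact h v hv
      · right
        intro v hv
        rcases List.mem_cons.1 hv with rfl | hv
        · exact he'.le
        · exact h v hv
  · intro v hv
    rcases List.mem_cons.1 hv with rfl | hv
    · rw [Finset.sum_eq_single ⟨k, hk⟩]
      · simp [e]
      · intro b _ hb
        have : (b : ℕ) ≠ k := fun h => hb (Fin.ext h)
        simp [e, this]
      · simp
    · exact h2 v hv
  · intro v hv i hi
    rcases List.mem_cons.1 hv with rfl | hv
    · unfold e; rw [if_neg (by omega)]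
    · exact h3 v hv i (by omega)

lemma z_base (k : ℕ) (hk : k ≤ r) : z (e r) k ∈ sp {l : List (Fin r → ℝ) | l.length = k ∧ Q l ∧
      ∀ v ∈ l, ∀ i : Fin r, k ≤ i → v i = 0} := by
  induction k with
  | zero =>
    refine single_mem_sp ⟨rfl, ⟨?_, ?_⟩, ?_⟩ <;> simp
  | succ k ih =>
    have := cone_base k hk (ih (by omega))
    refine Submodule.add_mem _ this (T_mem ?_ this)
    rintro l ⟨h1, h2, h3⟩
    refine ⟨by simp [h1], Q_neg l h2, ?_⟩
    intro v hv i hi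
    obtain ⟨w, hw, rfl⟩ := List.mem_map.1 hv
    simp [h3 w hw i hi]

lemma norm_le_of_l1 (v : Fin r → ℝ) (h : ∑ i, |v i| = 1) : ‖v‖ ≤ 1 := by
  rw [pi_norm_le_iff_of_nonneg zero_le_one]
  intro i
  rw [← h, Real.norm_eq_abs]
  exact Finset.single_le_sum (f := fun i => |v i|) (fun _ _ => abs_nonneg _) (Finset.mem_univ i)

lemma c_base (k : ℕ) (hk : k < r) : cone (e r k) (z (e r) k) ∈
    sp {l : List (Fin r → ℝ) | l.length = k + 1 ∧ Q l ∧ Diam 2 l} := by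
  refine sp_mono ?_ (cone_base k hk (z_base k hk.le))
  rintro l ⟨h1, h2, _⟩
  refine ⟨h1, h2, ?_⟩
  intro x hx y hy
  have := norm_le_of_l1 x (h2.2 x hx)
  have := norm_le_of_l1 y (h2.2 y hy)
  have := norm_sub_le x y
  linarith

theorem tucker (m : ℕ) (hm : m < r) (lab : (Fin r → ℝ) → ℕ)
    (h1 : ∀ v, ∑ i, |v i| = 1 → lab (-v) = flip (lab v) ∧ lab v < 2 * m) (δ : ℝ) (hδ : 0 < δ) :
    ∃ v w, ∑ i, |v i| = 1 ∧ ∑ i, |w i| = 1 ∧ ‖v - w‖ ≤ δ ∧ lab v ≠ lab w ∧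
      lab v / 2 = lab w / 2 := by
  by_contra hcon
  push Not at hcon
  have hρ0 : (0 : ℝ) ≤ (r / (r + 1) : ℝ) := by positivity
  have hρ : (r / (r + 1) : ℝ) < 1 := by
    rw [div_lt_one (by positivity)]; linarith
  obtain ⟨N, hN⟩ := exists_pow_lt_of_lt_one (show 0 < δ / 2 by linarith) hρ
  refine tucker_abs r m hm (e r) lab N ?_
  intro k hk
  refine sp_mono ?_ (It_mem r (k + 1) (by omega) Q Q_hull 2 (by norm_num) (c_base k hk) N)
  rintro l ⟨g1, g2, g3⟩
  refine ⟨g1, fun v hv => h1 v (g2.2 v hv), ?_⟩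
  intro a ha b hb hab
  obtain ⟨v, hv, rfl⟩ := List.mem_map.1 ha
  obtain ⟨w, hw, rfl⟩ := List.mem_map.1 hb
  by_contra hne
  exact hcon v w (g2.2 v hv) (g2.2 w hw) ((g3 v hv w hw).trans (by linarith)) hne hab

open Classical in
lemma ham_eps (m : ℕ) (hm : m < r) {P : Type*} (X : Fin m → Finset P)
    (φ : P → (Fin r → ℝ) →ₗ[ℝ] ℝ) (ε : ℝ) (hε : 0 < ε) :
    ∃ v, ∑ i, |v i| = 1 ∧ ∀ i, 2 * ((X i).filter (fun s => ε < φ s v)).card ≤ (X i).card ∧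
      2 * ((X i).filter (fun s => φ s v < -ε)).card ≤ (X i).card := by
  by_contra hcon
  push Not at hcon
  set pos : (Fin r → ℝ) → ℕ → Prop := fun v i => ∃ h : i < m,
    (X ⟨i, h⟩).card < 2 * ((X ⟨i, h⟩).filter (fun s => ε < φ s v)).card with hpos
  have hneg : ∀ v i, pos (-v) i ↔ ∃ h : i < m,
    (X ⟨i, h⟩).card < 2 * ((X ⟨i, h⟩).filter (fun s => φ s v < -ε)).card := by
    intro v i
    simp only [hpos, map_neg]
    simp only [lt_neg]
  have meet : ∀ v w i, pos v i → pos (-w) i → ∃ h : i < m, ∃ s ∈ X ⟨i, h⟩, ε < φ s v ∧ φ s w < -ε := by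
    intro v w i h1 h2
    rw [hneg] at h2
    obtain ⟨h, h1⟩ := h1
    obtain ⟨_, h2⟩ := h2
    refine ⟨h, ?_⟩
    by_contra hno
    push Not at hno
    have hd : Disjoint ((X ⟨i, h⟩).filter (fun s => ε < φ s v))
        ((X ⟨i, h⟩).filter (fun s => φ s w < -ε)) := by
      rw [Finset.disjoint_filter]
      intro s hs h3
      exact not_lt.2 (hno s hs h3)
    have h4 := Finset.card_le_card (Finset.union_subset
      (Finset.filter_subset (fun s => ε < φ s v) (X ⟨i, h⟩))
      (Finset.filter_subset (fun s => φ s w < -ε) (X ⟨i, h⟩)))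
    rw [Finset.card_union_of_disjoint hd] at h4
    omega
  have notboth : ∀ v i, pos v i → ¬ pos (-v) i := by
    intro v i h1 h2
    obtain ⟨_, s, _, h3, h4⟩ := meet v v i h1 h2
    linarith
  set ix : (Fin r → ℝ) → ℕ := fun v => sInf {i | pos v i ∨ pos (-v) i} with hix
  have ixneg : ∀ v, ix (-v) = ix v := by
    intro v
    simp only [hix, neg_neg, or_comm]
  have ixmem : ∀ v, ∑ i, |v i| = 1 → pos v (ix v) ∨ pos (-v) (ix v) := by
    intro v hv
    have : Set.Nonempty {i | pos v i ∨ pos (-v) i} := by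
      obtain ⟨i, hi⟩ := hcon v hv
      refine ⟨i, ?_⟩
      by_cases h : 2 * ((X i).filter (fun s => ε < φ s v)).card ≤ (X i).card
      · right
        rw [hneg]
        exact ⟨i.2, hi h⟩
      · left
        exact ⟨i.2, not_le.1 h⟩
    exact Nat.sInf_mem this
  set lab : (Fin r → ℝ) → ℕ := fun v => 2 * ix v + if pos v (ix v) then 0 else 1 with hlab
  have hδ : ∃ δ > 0, ∀ u : Fin r → ℝ, ‖u‖ ≤ δ → ∀ i, ∀ s ∈ X i, |φ s u| < ε := by
    have : ∀ᶠ u in nhds (0 : Fin r → ℝ), ∀ i, ∀ s ∈ X i, |φ s u| < ε := by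
      rw [Filter.eventually_all]
      intro i
      rw [Filter.eventually_all_finset]
      intro s _
      have hc : Continuous (fun u => |φ s u|) :=
        (LinearMap.continuous_of_finiteDimensional (φ s)).abs
      have := hc.tendsto 0
      simp only [map_zero, abs_zero] at this
      exact this.eventually (gt_mem_nhds hε)
    obtain ⟨δ, h1, h2⟩ := Metric.eventually_nhds_iff.1 this
    refine ⟨δ / 2, by linarith, fun u hu => h2 ?_⟩
    rw [dist_zero_right]
    linarith
  obtain ⟨δ, hδ0, hδ⟩ := hδ
  obtain ⟨v, w, hv, hw, hvw, hne, heq⟩ := tucker m hm lab (by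
    intro v hv
    have hmem := ixmem v hv
    constructor
    · simp only [hlab, ixneg, flip]
      by_cases h : pos v (ix v)
      · have h' := notboth v _ h
        simp only [h, h', if_true, if_false]
        split_ifs <;> omega
      · have h' := hmem.resolve_left h
        simp only [h, h', if_true, if_false]
        split_ifs <;> omega
    · have : ix v < m := by
        rcases hmem with ⟨h, _⟩ | ⟨h, _⟩ <;> exact h
      simp only [hlab]
      split_ifs <;> omega) δ hδ0
  have hixe : ix v = ix w := by
    simp only [hlab] at heq
    split_ifs at heq <;> omega
  have contra : ∀ v w, pos v (ix v) → ¬ pos w (ix w) → ∑ i, |w i| = 1 → ix v = ix w →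
      ‖v - w‖ ≤ δ → False := by
    intro v w h1 h2 hw h3 h4
    have h5 := (ixmem w hw).resolve_left h2
    rw [← h3] at h5
    obtain ⟨_, s, hs, h6, h7⟩ := meet v w _ h1 h5
    have := abs_lt.1 (hδ _ h4 _ s hs)
    rw [map_sub] at this
    linarith [this.2]
  by_cases h1 : pos v (ix v) <;> by_cases h2 : pos w (ix w)
  · apply hne; simp [hlab, hixe, h2, hixe ▸ h1]
  · exact contra v w h1 h2 hw hixe hvw
  · exact contra w v h2 h1 hv hixe.symm (by rwa [norm_sub_rev])
  · apply hne
    rw [hixe] at h1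
    simp only [hlab, h1, h2, if_false, hixe]

open Classical in
theorem ham (m : ℕ) (hm : m < r) {P : Type*} (X : Fin m → Finset P)
    (φ : P → (Fin r → ℝ) →ₗ[ℝ] ℝ) :
    ∃ v, v ≠ 0 ∧ ∀ i, 2 * ((X i).filter (fun s => 0 < φ s v)).card ≤ (X i).card ∧
      2 * ((X i).filter (fun s => φ s v < 0)).card ≤ (X i).card := by
  have hpos : ∀ k : ℕ, (0 : ℝ) < 1 / ((k : ℝ) + 1) := fun k => by positivity
  choose u hu1 hu2 using fun k : ℕ => ham_eps m hm X φ (1 / ((k : ℝ) + 1)) (hpos k)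
  have hK : IsCompact {v : Fin r → ℝ | ∑ i, |v i| = 1} := by
    refine Metric.isCompact_of_isClosed_isBounded ?_ ?_
    · exact isClosed_eq (by fun_prop) continuous_const
    · refine (Metric.isBounded_closedBall (x := (0 : Fin r → ℝ)) (r := 1)).subset ?_
      intro v hv
      rw [mem_closedBall_zero_iff]
      exact norm_le_of_l1 v hv
  obtain ⟨v, hv, ψ, hψ, hlim⟩ := hK.tendsto_subseq hu1
  have hε : Filter.Tendsto (fun k => 1 / (((ψ k : ℕ) : ℝ) + 1)) Filter.atTop (nhds 0) :=
    tendsto_one_div_add_atTop_nhds_zero_nat.comp hψ.tendsto_atTop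
  have hc : ∀ s, Filter.Tendsto (fun k => φ s (u (ψ k))) Filter.atTop (nhds (φ s v)) := fun s =>
    ((LinearMap.continuous_of_finiteDimensional (φ s)).tendsto v).comp hlim
  refine ⟨v, ?_, ?_⟩
  · rintro rfl
    simp at hv
  · intro i
    constructor
    · have : ∀ᶠ k in Filter.atTop, ∀ s ∈ X i, 0 < φ s v → 1 / (((ψ k : ℕ) : ℝ) + 1) < φ s (u (ψ k)) := by
        rw [Filter.eventually_all_finset]
        intro s _
        by_cases h : 0 < φ s v
        · filter_upwards [hε.eventually_lt (hc s) h] with k hk _ using hk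
        · filter_upwards with k hk using absurd hk h
      obtain ⟨k, hk⟩ := this.exists
      refine le_trans ?_ (hu2 (ψ k) i).1
      refine Nat.mul_le_mul_left 2 (Finset.card_le_card ?_)
      intro s hs
      rw [Finset.mem_filter] at hs ⊢
      exact ⟨hs.1, hk s hs.1 hs.2⟩
    · have : ∀ᶠ k in Filter.atTop, ∀ s ∈ X i, φ s v < 0 → φ s (u (ψ k)) < -(1 / (((ψ k : ℕ) : ℝ) + 1)) := by
        rw [Filter.eventually_all_finset]
        intro s _
        by_cases h : φ s v < 0
        · have hε' := hε.neg
          rw [neg_zero] at hε'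
          filter_upwards [(hc s).eventually_lt hε' h] with k hk _ using hk
        · filter_upwards with k hk using absurd hk h
      obtain ⟨k, hk⟩ := this.exists
      refine le_trans ?_ (hu2 (ψ k) i).2
      refine Nat.mul_le_mul_left 2 (Finset.card_le_card ?_)
      intro s hs
      rw [Finset.mem_filter] at hs ⊢
      exact ⟨hs.1, hk s hs.1 hs.2⟩

end ham

end

end PP

namespace PP

noncomputable section

lemma exists_exps (n d : ℕ) : ∃ g : Fin ((d + n).choose n) → (Fin n →₀ ℕ),
    Function.Injective g ∧ ∀ k, (g k).degree ≤ d := by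
  classical
  have hcard := Finset.card_finsuppAntidiag_nat_eq_choose (s := (Finset.univ : Finset (Fin (n + 1)))) d
  have h2 : (Finset.finsuppAntidiag (Finset.univ : Finset (Fin (n + 1))) d).card
      = (d + n).choose n := by
    rw [hcard, Finset.card_univ, Fintype.card_fin, ← Nat.choose_symm_add]
    congr 1
    omega
  let E := (Finset.equivFinOfCardEq h2).symm
  have hsum : ∀ k, (E k : Fin (n + 1) →₀ ℕ) 0 + ∑ i : Fin n, (E k : Fin (n + 1) →₀ ℕ) i.succ = d := by
    intro k
    have := (Finset.mem_finsuppAntidiag.1 (E k).2).1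
    rwa [Fin.sum_univ_succ] at this
  refine ⟨fun k => Finsupp.tail (E k : Fin (n + 1) →₀ ℕ), ?_, ?_⟩
  · intro k k' h
    apply E.injective
    apply Subtype.ext
    have ht : ∀ i : Fin n, (E k : Fin (n + 1) →₀ ℕ) i.succ = (E k' : Fin (n + 1) →₀ ℕ) i.succ := by
      intro i
      have := DFunLike.congr_fun h i
      simpa [Finsupp.tail_apply] using this
    ext i
    refine Fin.cases ?_ ht i
    have e1 := hsum k
    have e2 := hsum k'
    simp only [ht] at e1
    omega
  · intro k
    rw [Finsupp.degree_eq_sum]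
    have := hsum k
    simp only [Finsupp.tail_apply]
    omega

open Classical in
lemma polyham (n d : ℕ) {ι : Type*} [Fintype ι] (hι : Fintype.card ι < (d + n).choose n)
    (X : ι → Finset (Fin n → ℝ)) : ∃ p : MvPolynomial (Fin n) ℝ, p ≠ 0 ∧ p.totalDegree ≤ d ∧
    ∀ i, 2 * ((X i).filter (fun x => 0 < MvPolynomial.eval x p)).card ≤ (X i).card ∧
      2 * ((X i).filter (fun x => MvPolynomial.eval x p < 0)).card ≤ (X i).card := by
  obtain ⟨g, hg, hdeg⟩ := exists_exps n d
  let L : (Fin ((d + n).choose n) → ℝ) →ₗ[ℝ] MvPolynomial (Fin n) ℝ :=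
    Fintype.linearCombination ℝ (fun k => MvPolynomial.monomial (g k) (1 : ℝ))
  have hL : ∀ v, L v = ∑ k, v k • MvPolynomial.monomial (g k) (1 : ℝ) := fun v => rfl
  let φ : (Fin n → ℝ) → (Fin ((d + n).choose n) → ℝ) →ₗ[ℝ] ℝ := fun x =>
    (MvPolynomial.aeval x).toLinearMap ∘ₗ L
  have hφ : ∀ x v, φ x v = MvPolynomial.eval x (L v) := by
    intro x v
    simp [φ, MvPolynomial.aeval_eq_eval]
  obtain ⟨v, hv, h⟩ := ham (Fintype.card ι) hι (fun k => X ((Fintype.equivFin ι).symm k)) φ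
  refine ⟨L v, ?_, ?_, ?_⟩
  · intro h0
    apply hv
    funext k
    have := congrArg (MvPolynomial.coeff (g k)) h0
    rw [hL, MvPolynomial.coeff_sum, Finset.sum_eq_single k] at this
    · simpa using this
    · intro b _ hb
      rw [MvPolynomial.coeff_smul, MvPolynomial.coeff_monomial, if_neg (fun hh => hb (hg hh))]
      simp
    · simp
  · rw [hL]
    refine MvPolynomial.totalDegree_finsetSum_le ?_
    intro k _
    refine (MvPolynomial.totalDegree_smul_le _ _).trans ?_
    refine (MvPolynomial.totalDegree_monomial_le _ _).trans ?_
    exact hdeg k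
  · intro i
    have := h (Fintype.equivFin ι i)
    simpa only [hφ, Equiv.symm_apply_apply] using this

def sg (b : Bool) (y : ℝ) : Prop := if b then 0 < y else y < 0

open Classical in
lemma iter (n j : ℕ) (X : Fin j → Finset (Fin n → ℝ)) (d : ℕ → ℕ)
    (hd : ∀ t, j * 2 ^ t < (d t + n).choose n) (T : ℕ) :
    ∃ p : ℕ → MvPolynomial (Fin n) ℝ, (∀ t, p t ≠ 0 ∧ (p t).totalDegree ≤ d t) ∧
      ∀ i, ∀ σ : ℕ → Bool, 2 ^ T * ((X i).filter
        (fun x => ∀ t < T, sg (σ t) (MvPolynomial.eval x (p t)))).card ≤ (X i).card := by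
  induction T with
  | zero =>
    refine ⟨fun _ => 1, fun t => ⟨one_ne_zero, by simp⟩, ?_⟩
    intro i σ
    simp
  | succ T ih =>
    obtain ⟨p, hp1, hp2⟩ := ih
    obtain ⟨q, hq0, hq1, hq2⟩ := polyham n (d T) (ι := Fin j × (Fin T → Bool))
      (by simpa using hd T) (fun a => (X a.1).filter
        (fun x => ∀ t : Fin T, sg (a.2 t) (MvPolynomial.eval x (p t))))
    refine ⟨Function.update p T q, ?_, ?_⟩
    · intro t
      by_cases h : t = T
      · subst h; simp [hq0, hq1]
      · simp only [Function.update_of_ne h]; exact hp1 t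
    · intro i σ
      have h1 := hp2 i σ
      have h2 := hq2 (i, fun t => σ t)
      have h3 : (X i).filter (fun x => ∀ t : Fin T, sg (σ t) (MvPolynomial.eval x (p t)))
          = (X i).filter (fun x => ∀ t < T, sg (σ t) (MvPolynomial.eval x (p t))) := by
        ext x
        simp only [Finset.mem_filter]
        exact and_congr_right fun _ => ⟨fun h t ht => h ⟨t, ht⟩, fun h t => h t t.2⟩
      simp only [h3] at h2
      set Y := (X i).filter (fun x => ∀ t < T, sg (σ t) (MvPolynomial.eval x (p t))) with hY
      have h4 : (X i).filter (fun x => ∀ t < T + 1, sg (σ t)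
          (MvPolynomial.eval x (Function.update p T q t))) ⊆
          Y.filter (fun x => sg (σ T) (MvPolynomial.eval x q)) := by
        intro x hx
        rw [Finset.mem_filter] at hx
        rw [hY, Finset.mem_filter, Finset.mem_filter]
        refine ⟨⟨hx.1, ?_⟩, ?_⟩
        · intro t ht
          have := hx.2 t (by omega)
          rwa [Function.update_of_ne (by omega)] at this
        · have := hx.2 T (by omega)
          rwa [Function.update_self] at this
      have h5 : 2 * (Y.filter (fun x => sg (σ T) (MvPolynomial.eval x q))).card ≤ Y.card := by
        cases σ T
        · simpa [sg] using h2.2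
        · simpa [sg] using h2.1
      have h6 := Finset.card_le_card h4
      calc _ ≤ 2 ^ (T + 1) * (Y.filter (fun x => sg (σ T) (MvPolynomial.eval x q))).card :=
            Nat.mul_le_mul_left _ h6
        _ = 2 ^ T * (2 * (Y.filter (fun x => sg (σ T) (MvPolynomial.eval x q))).card) := by ring
        _ ≤ 2 ^ T * Y.card := Nat.mul_le_mul_left _ h5
        _ ≤ _ := h1

lemma sign_const {n : ℕ} (C : Set (Fin n → ℝ)) (hC : IsPreconnected C)
    (p : MvPolynomial (Fin n) ℝ) (h0 : ∀ y ∈ C, MvPolynomial.eval y p ≠ 0) {x y : Fin n → ℝ}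
    (hx : x ∈ C) (hy : y ∈ C) : sg (decide (0 < MvPolynomial.eval x p)) (MvPolynomial.eval y p) := by
  have hc : Continuous (fun y => MvPolynomial.eval y p) := MvPolynomial.continuous_eval p
  have himg := (hC.image _ hc.continuousOn).ordConnected
  have hno : (0 : ℝ) ∉ (fun y => MvPolynomial.eval y p) '' C := by
    rintro ⟨w, hw, h⟩
    exact h0 w hw h
  have mx := Set.mem_image_of_mem (fun y => MvPolynomial.eval y p) hx
  have my := Set.mem_image_of_mem (fun y => MvPolynomial.eval y p) hy
  unfold sg
  by_cases h : 0 < MvPolynomial.eval x p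
  · simp only [h, decide_true, if_true]
    by_contra h'
    exact hno (himg.out my mx ⟨not_lt.1 h', h.le⟩)
  · simp only [h, decide_false]
    simp only [Bool.false_eq_true, if_false]
    by_contra h'
    exact hno (himg.out mx my ⟨not_lt.1 h, not_lt.1 h'⟩)

lemma partition (n j : ℕ) (X : Fin j → Finset (Fin n → ℝ)) (d : ℕ → ℕ)
    (hd : ∀ t, j * 2 ^ t < (d t + n).choose n) (T : ℕ) :
    ∃ p : MvPolynomial (Fin n) ℝ, p ≠ 0 ∧ p.totalDegree ≤ ∑ t ∈ Finset.range T, d t ∧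
      ∀ (i : Fin j) (x : Fin n → ℝ), MvPolynomial.eval x p ≠ 0 →
        2 ^ T * ((X i : Set (Fin n → ℝ)) ∩
            connectedComponentIn {y : Fin n → ℝ | MvPolynomial.eval y p ≠ 0} x).ncard
          ≤ (X i).card := by
  classical
  obtain ⟨p, hp1, hp2⟩ := iter n j X d hd T
  refine ⟨∏ t ∈ Finset.range T, p t, ?_, ?_, ?_⟩
  · exact Finset.prod_ne_zero_iff.2 (fun t _ => (hp1 t).1)
  · exact (MvPolynomial.totalDegree_finsetProd _ _).trans
      (Finset.sum_le_sum (fun t _ => (hp1 t).2))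
  · intro i x hx
    refine le_trans ?_ (hp2 i (fun t => decide (0 < MvPolynomial.eval x (p t))))
    refine Nat.mul_le_mul_left _ ?_
    rw [← Set.ncard_coe_finset]
    refine Set.ncard_le_ncard ?_ (Finset.finite_toSet _)
    rintro y ⟨hy1, hy2⟩
    rw [Finset.mem_coe, Finset.mem_filter]
    refine ⟨hy1, ?_⟩
    intro t ht
    refine sign_const _ isPreconnected_connectedComponentIn (p t) ?_
      (mem_connectedComponentIn hx) hy2
    intro w hw
    have := connectedComponentIn_subset _ _ hw
    simp only [Set.mem_ofPred_eq, map_prod] at this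
    exact Finset.prod_ne_zero_iff.1 this t (Finset.mem_range.2 ht)

end

end PP

theorem polynomial_partitioning_several_point_sets (n j : ℕ) (hn : 1 ≤ n) (hj : 1 ≤ j)
    (X : Fin j → Finset (Fin n → ℝ)) (D : ℕ) (hD : 1 ≤ D) :
    ∃ p : MvPolynomial (Fin n) ℝ, p ≠ 0 ∧ p.totalDegree ≤ D ∧
      ∀ (i : Fin j) (x : Fin n → ℝ), MvPolynomial.eval x p ≠ 0 →
        (((X i : Set (Fin n → ℝ)) ∩
            connectedComponentIn {y : Fin n → ℝ | MvPolynomial.eval y p ≠ 0} x).ncard : ℝ) ≤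
          (2 ^ (n + 1) * (Nat.factorial n : ℝ) / ((2 : ℝ) ^ ((1 : ℝ) / n) - 1) ^ n) *
            j * ((D : ℝ) ^ n)⁻¹ * (X i).card := by
  have hn0 : n ≠ 0 := by omega
  have hnR : (0 : ℝ) < n := by exact_mod_cast hn
  have hjR : (0 : ℝ) < j := by exact_mod_cast hj
  have hDR : (0 : ℝ) < D := by exact_mod_cast hD
  have hfR : (0 : ℝ) < (Nat.factorial n : ℝ) := by exact_mod_cast Nat.factorial_pos n
  set α : ℝ := (2 : ℝ) ^ ((1 : ℝ) / n) with hα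
  have hα1 : 1 < α := Real.one_lt_rpow (by norm_num) (by positivity)
  have hαn : α ^ n = 2 := by
    rw [hα, one_div, Real.rpow_inv_natCast_pow (by norm_num) hn0]
  set a : ℝ := ((Nat.factorial n : ℝ) * j) ^ ((n : ℝ)⁻¹) with ha
  have ha0 : 0 < a := Real.rpow_pos_of_pos (by positivity) _
  have han : a ^ n = (Nat.factorial n : ℝ) * j := by
    rw [ha, Real.rpow_inv_natCast_pow (by positivity) hn0]
  have hβ : 0 < α - 1 := by linarith
  set d : ℕ → ℕ := fun t => ⌊a * α ^ t⌋₊ with hdd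
  have hd : ∀ t, j * 2 ^ t < (d t + n).choose n := by
    intro t
    have h1 : a * α ^ t < (d t : ℝ) + 1 := Nat.lt_floor_add_one _
    have h2 : (a * α ^ t) ^ n < ((d t : ℝ) + 1) ^ n :=
      pow_lt_pow_left₀ h1 (by positivity) hn0
    have h3 : (a * α ^ t) ^ n = (Nat.factorial n : ℝ) * (j * 2 ^ t) := by
      rw [mul_pow, han, ← pow_mul, mul_comm t n, pow_mul, hαn]; ring
    have h4 : (d t + 1) ^ n ≤ Nat.factorial n * (d t + n).choose n := by
      rw [← Nat.ascFactorial_eq_factorial_mul_choose]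
      exact Nat.pow_succ_le_ascFactorial _ _
    rw [h3] at h2
    have h5 : Nat.factorial n * (j * 2 ^ t) < (d t + 1) ^ n := by exact_mod_cast h2
    exact Nat.lt_of_mul_lt_mul_left (h5.trans_le h4)
  -- it suffices to find T
  have main : ∀ T : ℕ, (∑ t ∈ Finset.range T, d t ≤ D) →
      (D * (α - 1)) ^ n ≤ (Nat.factorial n : ℝ) * j * 2 ^ (T + 1) →
      ∃ p : MvPolynomial (Fin n) ℝ, p ≠ 0 ∧ p.totalDegree ≤ D ∧
      ∀ (i : Fin j) (x : Fin n → ℝ), MvPolynomial.eval x p ≠ 0 →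
        (((X i : Set (Fin n → ℝ)) ∩
            connectedComponentIn {y : Fin n → ℝ | MvPolynomial.eval y p ≠ 0} x).ncard : ℝ) ≤
          (2 ^ (n + 1) * (Nat.factorial n : ℝ) / (α - 1) ^ n) *
            j * ((D : ℝ) ^ n)⁻¹ * (X i).card := by
    intro T hT1 hT2
    obtain ⟨p, hp0, hp1, hp2⟩ := PP.partition n j X d hd T
    refine ⟨p, hp0, hp1.trans hT1, ?_⟩
    intro i x hx
    have h := hp2 i x hx
    set c := ((X i : Set (Fin n → ℝ)) ∩
            connectedComponentIn {y : Fin n → ℝ | MvPolynomial.eval y p ≠ 0} x).ncard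
    have h' : (2 : ℝ) ^ T * c ≤ (X i).card := by exact_mod_cast h
    rw [mul_pow] at hT2
    have e1 : (2 ^ (n + 1) * (Nat.factorial n : ℝ) / (α - 1) ^ n) * j * ((D : ℝ) ^ n)⁻¹ * (X i).card
      = (2 ^ (n + 1) * (Nat.factorial n : ℝ) * j * (X i).card) / ((D : ℝ) ^ n * (α - 1) ^ n) := by
      field_simp
    rw [e1, le_div_iff₀ (by positivity)]
    have h2n : (1 : ℝ) ≤ 2 ^ n := one_le_pow₀ (by norm_num)
    calc (c : ℝ) * ((D : ℝ) ^ n * (α - 1) ^ n)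
        ≤ c * ((Nat.factorial n : ℝ) * j * 2 ^ (T + 1)) := by gcongr
      _ = 2 * (Nat.factorial n : ℝ) * j * (2 ^ T * c) := by ring
      _ ≤ 2 * (Nat.factorial n : ℝ) * j * (X i).card := by gcongr
      _ = 1 * (2 * (Nat.factorial n : ℝ) * j * (X i).card) := by ring
      _ ≤ 2 ^ n * (2 * (Nat.factorial n : ℝ) * j * (X i).card) := by gcongr
      _ = _ := by ring
  by_cases hc : D * (α - 1) < a
  · refine main 0 (by simp) ?_
    have := pow_le_pow_left₀ (by positivity) hc.le n
    rw [han] at this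
    have h0 : 0 < (Nat.factorial n : ℝ) * j := by positivity
    rw [zero_add, pow_one]
    linarith
  · have hx : 1 ≤ D * (α - 1) / a := by
      rw [le_div_iff₀ ha0]; linarith
    obtain ⟨T, hT1, hT2⟩ := exists_nat_pow_near hx hα1
    rw [le_div_iff₀ ha0] at hT1
    rw [div_lt_iff₀ ha0] at hT2
    refine main T ?_ ?_
    · have h1 : ((∑ t ∈ Finset.range T, d t : ℕ) : ℝ) ≤ ∑ t ∈ Finset.range T, a * α ^ t := by
        push_cast
        exact Finset.sum_le_sum (fun t _ => Nat.floor_le (by positivity))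
      rw [← Finset.mul_sum, geom_sum_eq hα1.ne'] at h1
      have h2 : a * ((α ^ T - 1) / (α - 1)) ≤ D := by
        rw [mul_div_assoc', div_le_iff₀ hβ]
        nlinarith
      exact_mod_cast h1.trans h2
    · have := pow_le_pow_left₀ (by positivity) hT2.le n
      rw [mul_pow (α ^ (T + 1)), han, ← pow_mul, mul_comm (T + 1) n, pow_mul, hαn] at this
      linarith
end

section
/- Let n ≥ 1 and D ≥ 1 be integers and set C_n = 2^(n+1)·n! / (2^(1/n) − 1)^n. Let Γ be a finite family of real algebraic subsets of ℝ^n (each member being the common zero set of finitely many real polynomials), and let B ≥ 1 be a real number such that for every non-zero polynomial q ∈ ℝ[X₁,…,X_n] of total degree at most D, every γ ∈ Γ intersects at most B connected components of ℝ^n \ Z(q). Then there exists a non-zero polynomial p ∈ ℝ[X₁,…,X_n] of total degree at most D such that every connected component of ℝ^n \ Z(p) intersects at most C_n · B · D^(−n) · |Γ| members of Γ. -/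
namespace PP

/-- negate the block `j` -/
def bneg {N : ℕ} {R : Type*} [Neg R] (b : Fin N → ℕ) (j : ℕ) (x : Fin N → R) : Fin N → R :=
  fun a => if b a = j then - x a else x a

abbrev Sim (N : ℕ) := (Fin N → ℤ) × (Fin N → ℤ) × Equiv.Perm (Fin N)

def GoodPair (M : ℤ) (e o : ℤ) : Prop :=
  -M ≤ e ∧ e ≤ M ∧ -M ≤ o ∧ o ≤ M ∧ Even e ∧ (o = e + 1 ∨ o = e - 1)

open Classical in
noncomputable def Sx (N : ℕ) (M : ℤ) : Finset (Sim N) :=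
  ((Fintype.piFinset fun _ => Finset.Icc (-M) M) ×ˢ
    ((Fintype.piFinset fun _ => Finset.Icc (-M) M) ×ˢ Finset.univ)).filter
    (fun σ => ∀ a, GoodPair M (σ.1 a) (σ.2.1 a))

lemma mem_Sx {N : ℕ} {M : ℤ} {σ : Sim N} :
    σ ∈ Sx N M ↔ ∀ a, GoodPair M (σ.1 a) (σ.2.1 a) := by
  classical
  unfold Sx
  simp only [Finset.mem_filter, Finset.mem_product, Fintype.mem_piFinset, Finset.mem_Icc,
    Finset.mem_univ, and_true, and_iff_right_iff_imp]
  intro h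
  exact ⟨fun a => ⟨(h a).1, (h a).2.1⟩, fun a => ⟨(h a).2.2.1, (h a).2.2.2.1⟩⟩

def vert {N : ℕ} (σ : Sim N) (i : ℕ) : Fin N → ℤ :=
  fun a => if (σ.2.2 a : ℕ) < i then σ.2.1 a else σ.1 a

/-- the relation between a simplex and its neighbour through the facet opposite to vertex `i` -/
def Nb {N : ℕ} (b : Fin N → ℕ) (M : ℤ) (i : ℕ) (σ ρ : Sim N) : Prop :=
  (∀ l, l ≠ i → l ≤ N → vert ρ l = vert σ l) ∨
  (∃ a, (∀ l, vert ρ l = bneg b (b a) (vert σ l)) ∧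
    ∀ l, l ≠ i → l ≤ N → (vert σ l a = M ∨ vert σ l a = -M))

lemma bneg_bneg {N : ℕ} (b : Fin N → ℕ) (j : ℕ) (x : Fin N → ℤ) :
    bneg b j (bneg b j x) = x := by
  funext a; unfold bneg; split_ifs <;> simp

lemma exists_flip {N : ℕ} (b : Fin N → ℕ) (M : ℤ) (hM : Even M) (hM0 : 0 < M) (hN : 0 < N)
    (i : ℕ) (hi : i ≤ N) : ∃ T : Sim N → Sim N, ∀ σ ∈ Sx N M,
      T σ ∈ Sx N M ∧ T (T σ) = σ ∧ T σ ≠ σ ∧ Nb b M i σ (T σ) := by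
  classical
  obtain ⟨M', rfl⟩ := hM
  rcases Nat.eq_zero_or_pos i with h0 | h0
  · subst h0
    refine ⟨fun σ => (Function.update σ.1 (σ.2.2.symm ⟨0, hN⟩)
      (2 * σ.2.1 (σ.2.2.symm ⟨0, hN⟩) - σ.1 (σ.2.2.symm ⟨0, hN⟩)), σ.2.1, σ.2.2), ?_⟩
    rintro ⟨e, o, q⟩ hσ
    rw [mem_Sx] at hσ
    simp only at hσ ⊢
    refine ⟨?_, ?_, ?_, ?_⟩
    · rw [mem_Sx]
      intro a
      simp only
      by_cases ha : a = q.symm ⟨0, hN⟩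
      · subst ha
        simp only [Function.update_self]
        obtain ⟨h1, h2, h3, h4, ⟨r, h5⟩, h6⟩ := hσ (q.symm ⟨0, hN⟩)
        refine ⟨by lia, by lia, by lia, by lia, ?_, by lia⟩
        rcases h6 with h6 | h6
        · exact ⟨r + 1, by lia⟩
        · exact ⟨r - 1, by lia⟩
      · rw [Function.update_of_ne ha]; exact hσ a
    · simp
    · intro h
      have := congrFun (congrArg Prod.fst h) (q.symm ⟨0, hN⟩)
      simp only [Function.update_self] at this
      have := (hσ (q.symm ⟨0, hN⟩)).2.2.2.2.2
      lia
    · left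
      intro l hl hl'
      funext a
      simp only [vert]
      by_cases ha : a = q.symm ⟨0, hN⟩
      · subst ha
        simp [Nat.pos_of_ne_zero hl]
      · rw [Function.update_of_ne ha]
  rcases Nat.lt_or_ge i N with h1 | h1
  · refine ⟨fun σ => (σ.1, σ.2.1, σ.2.2.trans (Equiv.swap ⟨i-1, by lia⟩ ⟨i, h1⟩)), ?_⟩
    rintro ⟨e, o, q⟩ hσ
    rw [mem_Sx] at hσ
    refine ⟨?_, ?_, ?_, ?_⟩
    · rw [mem_Sx]; exact hσ
    · simp only [Prod.mk.injEq, true_and]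
      ext a; simp
    · intro h
      have := congrArg (fun f : Sim N => f.2.2 (q.symm ⟨i, h1⟩)) h
      simp [Fin.ext_iff] at this
      lia
    · left
      intro l hl hl'
      funext a
      simp only [vert, Equiv.trans_apply]
      have : ((Equiv.swap (⟨i-1, by lia⟩ : Fin N) ⟨i, h1⟩ (q a) : Fin N) : ℕ) < l ↔ (q a : ℕ) < l := by
        rw [Equiv.swap_apply_def]
        split_ifs with h2 h3
        · rw [h2]; simp only; lia
        · rw [h3]; simp only; lia
        · rfl
      simp only [this]
  · obtain rfl : i = N := le_antisymm hi h1
    let z : Fin i := ⟨i - 1, by lia⟩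
    refine ⟨fun σ => if σ.1 (σ.2.2.symm z) = M' + M' ∨ σ.1 (σ.2.2.symm z) = -(M' + M') then
        (bneg b (b (σ.2.2.symm z)) σ.1, bneg b (b (σ.2.2.symm z)) σ.2.1, σ.2.2) else
      (σ.1, Function.update σ.2.1 (σ.2.2.symm z)
      (2 * σ.1 (σ.2.2.symm z) - σ.2.1 (σ.2.2.symm z)), σ.2.2), ?_⟩
    rintro ⟨e, o, q⟩ hσ
    rw [mem_Sx] at hσ
    simp only at hσ ⊢
    have hz : ∀ l, l ≠ i → l ≤ i → ¬ ((z : ℕ) < l) := by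
      intro l _ _; simp only [z]; lia
    by_cases hc : e (q.symm z) = M' + M' ∨ e (q.symm z) = -(M' + M')
    · rw [if_pos hc]
      refine ⟨?_, ?_, ?_, ?_⟩
      · rw [mem_Sx]
        intro a
        obtain ⟨h1, h2, h3, h4, ⟨r, h5⟩, h6⟩ := hσ a
        simp only [bneg]
        split_ifs
        · refine ⟨by lia, by lia, by lia, by lia, ⟨-r, by lia⟩, by lia⟩
        · refine ⟨by lia, by lia, by lia, by lia, ⟨r, by lia⟩, by lia⟩
      · rw [if_pos]
        · simp [bneg_bneg]
        · simp only [bneg, if_true]; lia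
      · intro h
        have := congrFun (congrArg Prod.fst h) (q.symm z)
        simp only [bneg, if_true] at this
        lia
      · right
        refine ⟨q.symm z, ?_, ?_⟩
        · intro l; funext a; simp only [vert, bneg]; split_ifs <;> rfl
        · intro l hl hl'
          simp only [vert, Equiv.apply_symm_apply, hz l hl hl', if_false]
          exact hc
    · rw [if_neg hc]
      refine ⟨?_, ?_, ?_, ?_⟩
      · rw [mem_Sx]
        intro a
        simp only
        by_cases ha : a = q.symm z
        · subst ha
          simp only [Function.update_self]
          obtain ⟨h1, h2, h3, h4, ⟨r, h5⟩, h6⟩ := hσ (q.symm z)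
          refine ⟨by lia, by lia, by lia, by lia, ⟨r, h5⟩, by lia⟩
        · rw [Function.update_of_ne ha]; exact hσ a
      · rw [if_neg hc]; simp
      · intro h
        have := congrFun (congrArg (fun f : Sim i => f.2.1) h) (q.symm z)
        simp only [Function.update_self] at this
        have := (hσ (q.symm z)).2.2.2.2.2
        lia
      · left
        intro l hl hl'
        funext a
        simp only [vert]
        by_cases ha : a = q.symm z
        · subst ha
          simp [hz l hl hl']
        · rw [Function.update_of_ne ha]

lemma vert_bd {N : ℕ} {M : ℤ} {σ : Sim N} (h : σ ∈ Sx N M) (l : ℕ) (a : Fin N) :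
    -M ≤ vert σ l a ∧ vert σ l a ≤ M := by
  obtain ⟨h1, h2, h3, h4, -⟩ := mem_Sx.1 h a
  unfold vert; split_ifs <;> constructor <;> assumption

/-- equivariance with character `u` -/
def Eqv {N : ℕ} (b : Fin N → ℕ) (M : ℤ) (u : ℕ → ZMod 2) (f : (Fin N → ℤ) → ZMod 2) : Prop :=
  ∀ x : Fin N → ℤ, (∀ c, -M ≤ x c ∧ x c ≤ M) → ∀ a, (x a = M ∨ x a = -M) →
    f (bneg b (b a) x) = f x + u (b a)

lemma z2 (x : ZMod 2) : x + x = 0 := CharTwo.add_self_eq_zero x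

section inv
variable {N : ℕ} (b : Fin N → ℕ) (M : ℤ) (hM : Even M) (hM0 : 0 < M) (hN : 0 < N)
  (W : Fin N → ℕ → ZMod 2) (ε : Fin N → (Fin N → ℤ) → ZMod 2) (hε : ∀ k, Eqv b M (W k) (ε k))
  (k0 : Fin N) (η : (Fin N → ℤ) → ZMod 2) (hη : Eqv b M 0 η)

/-- generalized product term -/
def G (ε : Fin N → (Fin N → ℤ) → ZMod 2) (k0 : Fin N) (η : (Fin N → ℤ) → ZMod 2) (h : ℕ) (p p' : Fin N → ℕ) (σ : Sim N) : ZMod 2 :=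
  η (vert σ h) * ∏ k ∈ Finset.univ.erase k0, (ε k (vert σ (p k)) + ε k (vert σ (p' k)))

include hM hM0 hN hε hη

lemma G_zero (i : ℕ) (hi : i ≤ N) (h : ℕ) (p p' : Fin N → ℕ) (hh : h ≠ i) (hhN : h ≤ N)
    (hp : ∀ k, k ≠ k0 → p k ≠ i ∧ p k ≤ N) (hp' : ∀ k, k ≠ k0 → p' k ≠ i ∧ p' k ≤ N) :
    ∑ σ ∈ Sx N M, G ε k0 η h p p' σ = 0 := by
  obtain ⟨T, hT⟩ := exists_flip b M hM hM0 hN i hi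
  have key : ∀ σ ∈ Sx N M, G ε k0 η h p p' (T σ) = G ε k0 η h p p' σ := by
    intro σ hσ
    obtain ⟨-, -, -, h4⟩ := hT σ hσ
    unfold G
    rcases h4 with h4 | ⟨a, h4, h5⟩
    · rw [h4 h hh hhN]
      congr 1
      apply Finset.prod_congr rfl
      intro k hk
      have hk := (Finset.mem_erase.1 hk).1
      rw [h4 _ (hp k hk).1 (hp k hk).2, h4 _ (hp' k hk).1 (hp' k hk).2]
    · have e : ∀ (u : ℕ → ZMod 2) f, Eqv b M u f → ∀ l, l ≠ i → l ≤ N →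
          f (vert (T σ) l) = f (vert σ l) + u (b a) := by
        intro u f hf l h6 h7
        rw [h4 l, hf _ (vert_bd hσ l) a (h5 l h6 h7)]
      rw [e _ _ hη h hh hhN]
      simp only [Pi.zero_apply, add_zero]
      congr 1
      apply Finset.prod_congr rfl
      intro k hk
      have hk := (Finset.mem_erase.1 hk).1
      rw [e _ _ (hε k) _ (hp k hk).1 (hp k hk).2, e _ _ (hε k) _ (hp' k hk).1 (hp' k hk).2]
      linear_combination z2 (W k (b a))
  refine Finset.sum_involution (fun σ _ => T σ) ?_ ?_ ?_ ?_
  · intro σ hσ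
    rw [key σ hσ]; exact z2 _
  · intro σ hσ _
    exact (hT σ hσ).2.2.1
  · intro σ hσ; exact (hT σ hσ).1
  · intro σ hσ; exact (hT σ hσ).2.1

/-- moving step -/
lemma G_step (m : Fin N) (hm : m ≠ k0) (i : ℕ) (hi : i + 1 < N) (h : ℕ) (p p' : Fin N → ℕ) (hh : h ≠ i + 1) (hhN : h ≤ N)
    (hp : ∀ k, k ≠ k0 → k ≠ m → p k ≠ i + 1 ∧ p k ≤ N)
    (hp' : ∀ k, k ≠ k0 → k ≠ m → p' k ≠ i + 1 ∧ p' k ≤ N) :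
    ∑ σ ∈ Sx N M, G ε k0 η h (Function.update p m i) (Function.update p' m (i+1)) σ =
    ∑ σ ∈ Sx N M, G ε k0 η h (Function.update p m (i+1)) (Function.update p' m (i+2)) σ := by
  have h0 := G_zero b M hM hM0 hN W ε hε k0 η hη (i+1) hi.le h (Function.update p m i)
    (Function.update p' m (i+2)) hh hhN ?_ ?_
  · rw [← sub_eq_zero, ← Finset.sum_sub_distrib]
    rw [← h0]
    apply Finset.sum_congr rfl
    intro σ _
    unfold G
    have hmem : m ∈ Finset.univ.erase k0 := by simp [hm]
    rw [← Finset.mul_prod_erase _ _ hmem, ← Finset.mul_prod_erase _ _ hmem,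
      ← Finset.mul_prod_erase _ _ hmem]
    have e : ∀ c d c' d' : ℕ, ∏ x ∈ (Finset.univ.erase k0).erase m,
        (ε x (vert σ (Function.update p m c x)) + ε x (vert σ (Function.update p' m d x))) =
        ∏ x ∈ (Finset.univ.erase k0).erase m,
        (ε x (vert σ (Function.update p m c' x)) + ε x (vert σ (Function.update p' m d' x))) := by
      intro c d c' d'
      apply Finset.prod_congr rfl
      intro k hk
      have hk := (Finset.mem_erase.1 hk).1
      simp only [Function.update_of_ne hk]
    rw [e i (i+1) i (i+2), e (i+1) (i+2) i (i+2)]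
    simp only [Function.update_self]
    linear_combination (-η (vert σ h) * ∏ x ∈ (Finset.univ.erase k0).erase m,
        (ε x (vert σ (Function.update p m i x)) + ε x (vert σ (Function.update p' m (i+2) x)))) *
        z2 (ε m (vert σ (i+2)))
  · intro k hk
    by_cases h : k = m
    · subst h; simp; lia
    · rw [Function.update_of_ne h]; exact hp k hk h
  · intro k hk
    by_cases h : k = m
    · subst h; simp; lia
    · rw [Function.update_of_ne h]; exact hp' k hk h

lemma S1 : ∑ σ ∈ Sx N M, G ε k0 η k0 (fun k => (k : ℕ)) (fun k => (k : ℕ) + 1) σ = 0 := by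
  have key : ∀ m : ℕ, (k0 : ℕ) + 1 ≤ m → m ≤ N →
      ∑ σ ∈ Sx N M, G ε k0 η k0 (fun k => if (k : ℕ) < m ∧ (k0 : ℕ) < k then (k : ℕ) - 1 else (k : ℕ))
        (fun k => (if (k : ℕ) < m ∧ (k0 : ℕ) < k then (k : ℕ) - 1 else (k : ℕ)) + 1) σ =
      ∑ σ ∈ Sx N M, G ε k0 η k0 (fun k => (k : ℕ)) (fun k => (k : ℕ) + 1) σ := by
    intro m hm
    induction m, hm using Nat.le_induction with
    | base =>
      intro _
      have : ∀ k : Fin N, ¬ ((k : ℕ) < k0 + 1 ∧ (k0 : ℕ) < k) := by intro k; lia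
      simp only [this, if_false]
    | succ m hm ih =>
      intro hmN
      rw [← ih (by lia)]
      obtain ⟨i, rfl⟩ : ∃ i, m = i + 1 := ⟨m - 1, by lia⟩
      have := G_step b M hM hM0 hN W ε hε k0 η hη ⟨i+1, hmN⟩ (by rw [Ne, Fin.ext_iff]; simp only; lia) i hmN k0
        (fun k => if (k : ℕ) < (i+1) ∧ (k0 : ℕ) < k then (k : ℕ) - 1 else (k : ℕ))
        (fun k => (if (k : ℕ) < (i+1) ∧ (k0 : ℕ) < k then (k : ℕ) - 1 else (k : ℕ)) + 1) (by lia) (by lia) ?_ ?_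
      · convert this using 3
        · funext k
          by_cases hk : k = ⟨i+1, hmN⟩
          · subst hk; simp; lia
          · rw [Function.update_of_ne hk]
            rw [Fin.ext_iff] at hk; simp only at hk
            congr 1
            simp only [eq_iff_iff]; lia
        · funext k
          by_cases hk : k = ⟨i+1, hmN⟩
          · subst hk; simp; lia
          · rw [Function.update_of_ne hk]
            rw [Fin.ext_iff] at hk; simp only at hk
            congr 2
            simp only [eq_iff_iff]; lia
        · funext k
          by_cases hk : k = ⟨i+1, hmN⟩
          · subst hk; simp
          · rw [Function.update_of_ne hk]
        · funext k
          by_cases hk : k = ⟨i+1, hmN⟩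
          · subst hk; simp
          · rw [Function.update_of_ne hk]
      · intro k hk hk'
        rw [Ne, Fin.ext_iff] at hk hk'; simp only at hk'
        split_ifs <;> lia
      · intro k hk hk'
        rw [Ne, Fin.ext_iff] at hk hk'; simp only at hk'
        split_ifs <;> lia
  rw [← key N (by lia) le_rfl]
  apply G_zero b M hM hM0 hN W ε hε k0 η hη N le_rfl
  · lia
  · lia
  · intro k hk
    rw [Ne, Fin.ext_iff] at hk
    split_ifs <;> lia
  · intro k hk
    rw [Ne, Fin.ext_iff] at hk
    split_ifs <;> lia

lemma S2 : ∑ σ ∈ Sx N M, G ε k0 η (k0 + 1) (fun k => (k : ℕ)) (fun k => (k : ℕ) + 1) σ = 0 := by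
  -- move the factors `k < k0` up, starting from `k0 - 1`
  have key : ∀ t : ℕ, t ≤ k0 →
      ∑ σ ∈ Sx N M, G ε k0 η (k0 + 1) (fun k => if (k : ℕ) + t ≥ k0 ∧ (k : ℕ) < k0 then (k : ℕ) + 1 else (k : ℕ))
        (fun k => (if (k : ℕ) + t ≥ k0 ∧ (k : ℕ) < k0 then (k : ℕ) + 1 else (k : ℕ)) + 1) σ =
      ∑ σ ∈ Sx N M, G ε k0 η (k0 + 1) (fun k => (k : ℕ)) (fun k => (k : ℕ) + 1) σ := by
    intro t
    induction t with
    | zero =>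
      intro _
      have : ∀ k : Fin N, ¬ ((k : ℕ) + 0 ≥ k0 ∧ (k : ℕ) < k0) := by intro k; lia
      simp only [this, if_false]
    | succ t ih =>
      intro ht
      rw [← ih (by lia)]
      obtain ⟨i, hi⟩ : ∃ i, i + t + 1 = (k0 : ℕ) := ⟨k0 - t - 1, by lia⟩
      have hiN : i < N := by lia
      have := G_step b M hM hM0 hN W ε hε k0 η hη ⟨i, hiN⟩ (by rw [Ne, Fin.ext_iff]; simp only; lia) i (by lia) (k0 + 1)
        (fun k => if (k : ℕ) + t ≥ k0 ∧ (k : ℕ) < k0 then (k : ℕ) + 1 else (k : ℕ))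
        (fun k => (if (k : ℕ) + t ≥ k0 ∧ (k : ℕ) < k0 then (k : ℕ) + 1 else (k : ℕ)) + 1) (by lia) (by lia) ?_ ?_
      · symm
        convert this using 3
        · funext k
          by_cases hk : k = ⟨i, hiN⟩
          · subst hk; simp; lia
          · rw [Function.update_of_ne hk]
        · funext k
          by_cases hk : k = ⟨i, hiN⟩
          · subst hk; simp; lia
          · rw [Function.update_of_ne hk]
        · funext k
          by_cases hk : k = ⟨i, hiN⟩
          · subst hk; simp; lia
          · rw [Function.update_of_ne hk]
            rw [Fin.ext_iff] at hk; simp only at hk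
            congr 1
            simp only [eq_iff_iff]; lia
        · funext k
          by_cases hk : k = ⟨i, hiN⟩
          · subst hk; simp; lia
          · rw [Function.update_of_ne hk]
            rw [Fin.ext_iff] at hk; simp only at hk
            congr 2
            simp only [eq_iff_iff]; lia
      · intro k hk hk'
        rw [Ne, Fin.ext_iff] at hk hk'; simp only at hk'
        split_ifs <;> lia
      · intro k hk hk'
        rw [Ne, Fin.ext_iff] at hk hk'; simp only at hk'
        split_ifs <;> lia
  rw [← key k0 le_rfl]
  apply G_zero b M hM hM0 hN W ε hε k0 η hη 0 (by lia)
  · lia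
  · lia
  · intro k hk
    rw [Ne, Fin.ext_iff] at hk
    split_ifs <;> lia
  · intro k hk
    rw [Ne, Fin.ext_iff] at hk
    split_ifs <;> lia

omit hM hM0 hN hε hη

noncomputable def SS (M : ℤ) (ε : Fin N → (Fin N → ℤ) → ZMod 2) : ZMod 2 :=
  ∑ σ ∈ Sx N M, ∏ k, (ε k (vert σ k) + ε k (vert σ (k+1)))

end inv

lemma SS_update {N : ℕ} (b : Fin N → ℕ) (M : ℤ) (hM : Even M) (hM0 : 0 < M) (hN : 0 < N)
    (W : Fin N → ℕ → ZMod 2) (ε : Fin N → (Fin N → ℤ) → ZMod 2) (hε : ∀ k, Eqv b M (W k) (ε k))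
    (k0 : Fin N) (f : (Fin N → ℤ) → ZMod 2) (hf : Eqv b M (W k0) f) :
    SS M (Function.update ε k0 f) = SS M ε := by
  have hη : Eqv b M 0 (fun x => f x + ε k0 x) := by
    intro x hx a ha
    simp only
    rw [hf x hx a ha, hε k0 x hx a ha]
    simp only [Pi.zero_apply]
    linear_combination z2 (W k0 (b a))
  have h1 := S1 b M hM hM0 hN W ε hε k0 _ hη
  have h2 := S2 b M hM hM0 hN W ε hε k0 _ hη
  rw [← sub_eq_zero]
  unfold SS
  rw [← Finset.sum_sub_distrib]
  rw [show (0 : ZMod 2) = 0 + 0 by simp]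
  nth_rw 1 [← h1]
  rw [← h2, ← Finset.sum_add_distrib]
  apply Finset.sum_congr rfl
  intro σ _
  unfold G
  rw [← Finset.mul_prod_erase _ _ (Finset.mem_univ k0), ← Finset.mul_prod_erase _ _ (Finset.mem_univ k0)]
  have e : ∏ x ∈ Finset.univ.erase k0, (Function.update ε k0 f x (vert σ x) + Function.update ε k0 f x (vert σ (x+1)))
      = ∏ x ∈ Finset.univ.erase k0, (ε x (vert σ x) + ε x (vert σ (x+1))) := by
    apply Finset.prod_congr rfl
    intro k hk
    rw [Function.update_of_ne (Finset.mem_erase.1 hk).1]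
  rw [e]
  simp only [Function.update_self]
  generalize ∏ x ∈ Finset.univ.erase k0, (ε x (vert σ x) + ε x (vert σ (x+1))) = P
  linear_combination (-P) * z2 (ε k0 (vert σ k0)) - P * z2 (ε k0 (vert σ (k0+1)))

lemma SS_eq {N : ℕ} (b : Fin N → ℕ) (M : ℤ) (hM : Even M) (hM0 : 0 < M) (hN : 0 < N)
    (W : Fin N → ℕ → ZMod 2) (ε ε' : Fin N → (Fin N → ℤ) → ZMod 2) (hε : ∀ k, Eqv b M (W k) (ε k))
    (hε' : ∀ k, Eqv b M (W k) (ε' k)) : SS M ε' = SS M ε := by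
  classical
  have key : ∀ s : Finset (Fin N), SS M (fun k => if k ∈ s then ε' k else ε k) = SS M ε := by
    intro s
    induction s using Finset.induction_on with
    | empty => simp
    | insert a s ha ih =>
      rw [← ih]
      rw [← SS_update b M hM hM0 hN W (fun k => if k ∈ s then ε' k else ε k) _ a (ε' a) (hε' a)]
      · congr 1
        funext k
        by_cases h : k = a
        · subst h; simp
        · rw [Function.update_of_ne h]; simp [h]
      · intro k
        split_ifs
        · exact hε' k
        · exact hε k
  have := key Finset.univ
  simpa using this

end PP

namespace PP

section ev
variable {N : ℕ}

open Classical in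
/-- odd function on the boundary of block `j` -/
noncomputable def tau (b : Fin N → ℕ) (M : ℤ) (j : ℕ) (x : Fin N → ℤ) : ZMod 2 :=
  if ∃ a, b a = j ∧ x a = M ∧ ∀ c < a, b c = j → ¬ (x c = M ∨ x c = -M) then 1 else 0

lemma tau_congr (b : Fin N → ℕ) (M : ℤ) (j : ℕ) (x y : Fin N → ℤ) (h : ∀ a, b a = j → x a = y a) :
    tau b M j x = tau b M j y := by
  unfold tau
  congr 1
  apply propext
  refine exists_congr fun a => and_congr_right fun ha => ?_
  rw [h a ha]
  refine and_congr_right fun _ => forall_congr' fun c => imp_congr_right fun _ =>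
    imp_congr_right fun hc => ?_
  rw [h c hc]

lemma tau_odd (b : Fin N → ℕ) (M : ℤ) (hM : 0 < M) (x : Fin N → ℤ) (a : Fin N)
    (ha : x a = M ∨ x a = -M) :
    tau b M (b a) (bneg b (b a) x) = tau b M (b a) x + 1 := by
  classical
  have hex : ∃ n : ℕ, ∃ h : n < N, b ⟨n, h⟩ = b a ∧ (x ⟨n, h⟩ = M ∨ x ⟨n, h⟩ = -M) :=
    ⟨a, a.2, rfl, ha⟩
  obtain ⟨hn, h1, h2⟩ := Nat.find_spec hex
  have hmin : ∀ c : Fin N, c < ⟨Nat.find hex, hn⟩ → b c = b a → ¬ (x c = M ∨ x c = -M) := by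
    intro c hc hbc h
    exact Nat.find_min hex (m := c) hc ⟨c.2, hbc, h⟩
  set m : Fin N := ⟨Nat.find hex, hn⟩ with hm
  have uniq : ∀ c : Fin N, b c = b a → (x c = M ∨ x c = -M) →
      (∀ d < c, b d = b a → ¬ (x d = M ∨ x d = -M)) → c = m := by
    intro c hc hx hmin'
    rcases lt_trichotomy c m with h | h | h
    · exact absurd hx (hmin c h hc)
    · exact h
    · exact absurd h2 (hmin' m h h1)
  have t1 : tau b M (b a) x = if x m = M then 1 else 0 := by
    unfold tau
    congr 1
    apply propext
    constructor
    · rintro ⟨c, hc, hx, hmin'⟩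
      rw [← uniq c hc (Or.inl hx) hmin']; exact hx
    · intro h; exact ⟨m, h1, h, hmin⟩
  have t2 : tau b M (b a) (bneg b (b a) x) = if x m = -M then 1 else 0 := by
    unfold tau
    congr 1
    apply propext
    constructor
    · rintro ⟨c, hc, hx, hmin'⟩
      simp only [bneg, hc, if_true] at hx
      have hx : x c = -M := by lia
      rw [← uniq c hc (Or.inr hx) ?_]; · exact hx
      intro d hd hbd
      have := hmin' d hd hbd
      simp only [bneg, hbd, if_true] at this
      lia
    · intro h
      refine ⟨m, h1, by simp only [bneg, h1, if_true]; lia, ?_⟩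
      intro c hc hbc
      have := hmin c hc hbc
      simp only [bneg, hbc, if_true]
      lia
  rw [t1, t2]
  rcases h2 with h2 | h2
  · rw [if_neg (by lia), if_pos h2]; decide
  · rw [if_pos h2, if_neg (by lia)]; decide

/-- the model sign functions -/
noncomputable def ep (b : Fin N → ℕ) (M : ℤ) (W : Fin N → ℕ → ZMod 2) (k : Fin N) (x : Fin N → ℤ) : ZMod 2 :=
  (if 0 < x k then 1 else if x k = 0 then tau b M (b k) x else 0) +
    ∑ i ∈ Finset.range (b k), W k i * tau b M i x

lemma ep_eqv (b : Fin N → ℕ) (M : ℤ) (hM : 0 < M) (W : Fin N → ℕ → ZMod 2)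
    (hW1 : ∀ k, W k (b k) = 1) (hW0 : ∀ k j, b k < j → W k j = 0) (k : Fin N) :
    Eqv b M (W k) (ep b M W k) := by
  intro x hx a ha
  have hne : ∀ j, j ≠ b a → tau b M j (bneg b (b a) x) = tau b M j x := by
    intro j hj
    apply tau_congr
    intro c hc
    simp only [bneg]; rw [if_neg]; rw [hc]; exact hj
  have hodd := tau_odd b M hM x a ha
  unfold ep
  rcases lt_trichotomy (b a) (b k) with h | h | h
  · rw [← Finset.add_sum_erase _ _ (Finset.mem_range.2 h), ← Finset.add_sum_erase _ _ (Finset.mem_range.2 h)]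
    rw [Finset.sum_congr rfl (fun i hi => by rw [hne i (Finset.mem_erase.1 hi).1])]
    rw [hodd, hne _ h.ne']
    have : bneg b (b a) x k = x k := by simp only [bneg]; rw [if_neg h.ne']
    rw [this]; ring
  · rw [Finset.sum_congr rfl (fun i hi => by
      rw [hne i (by have := Finset.mem_range.1 hi; lia)])]
    have : bneg b (b a) x k = - x k := by simp only [bneg]; rw [if_pos h.symm]
    rw [this, h, hW1, ← h, hodd]
    rcases lt_trichotomy (x k) 0 with h' | h' | h'
    · rw [if_pos (by lia), if_neg (by lia), if_neg (by lia)]; ring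
    · simp only [h', neg_zero, lt_irrefl, if_false, if_true]; ring
    · rw [if_neg (by lia), if_neg (by lia), if_pos (by lia)]
      linear_combination -z2 1
  · rw [Finset.sum_congr rfl (fun i hi => by
      rw [hne i (by have := Finset.mem_range.1 hi; lia)])]
    have : bneg b (b a) x k = x k := by simp only [bneg]; rw [if_neg h.ne]
    rw [this, hne _ h.ne, hW0 k _ h, add_zero]

lemma vert_succ_of_ne (σ : Sim N) (k a : Fin N) (h : σ.2.2 a ≠ k) : vert σ (k+1) a = vert σ k a := by
  have : (σ.2.2 a : ℕ) ≠ k := fun h' => h (Fin.ext h')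
  simp only [vert]
  have : (σ.2.2 a : ℕ) < k + 1 ↔ (σ.2.2 a : ℕ) < k := by lia
  simp only [this]

lemma SS_ep (b : Fin N → ℕ) (hb : Monotone b) (M : ℤ) (hM : 2 ≤ M) (W : Fin N → ℕ → ZMod 2) :
    SS M (ep b M W) = 1 := by
  classical
  unfold SS
  rw [Finset.sum_eq_single ((fun _ => 0, fun _ => 1, Equiv.refl _) : Sim N)]
  · apply Finset.prod_eq_one
    intro k _
    have hv : ∀ l a, vert ((fun _ => 0, fun _ => 1, Equiv.refl _) : Sim N) l a = 0 ∨
        vert ((fun _ => 0, fun _ => 1, Equiv.refl _) : Sim N) l a = 1 := by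
      intro l a; simp only [vert]; split_ifs <;> simp
    have ht : ∀ l j, tau b M j (vert ((fun _ => 0, fun _ => 1, Equiv.refl _) : Sim N) l) = 0 := by
      intro l j
      unfold tau
      rw [if_neg]
      rintro ⟨a, -, h, -⟩
      have := hv l a
      lia
    simp only [ep, ht, mul_zero, Finset.sum_const_zero, add_zero]
    simp [vert]
  · intro σ hσ hne
    by_contra hprod
    apply hne
    rw [mem_Sx] at hσ
    have hk : ∀ k : Fin N, ep b M W k (vert σ k) ≠ ep b M W k (vert σ (k+1)) := by
      intro k h
      apply hprod
      apply Finset.prod_eq_zero (Finset.mem_univ k)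
      rw [h]; exact z2 _
    obtain ⟨e, o, q⟩ := σ
    -- the permutation is the identity
    have hq : ∀ n : ℕ, ∀ k : Fin N, (k : ℕ) = n → q k = k := by
      intro n
      induction n using Nat.strong_induction_on with
      | _ n ih =>
        intro k hkn
        by_contra hqk
        have hsym : ∀ k' : Fin N, k ≤ k' → k ≤ q.symm k' := by
          intro k' hk'
          by_contra h
          have h := not_le.1 h
          have := ih (q.symm k') (by rw [← hkn]; exact h) _ rfl
          rw [Equiv.apply_symm_apply] at this
          rw [← this] at h
          exact absurd h (not_lt.2 hk')
        set l := q.symm k with hl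
        have hlk : k < l := lt_of_le_of_ne (hsym k le_rfl) (by
          intro h; apply hqk
          have h9 : q l = k := by rw [hl]; simp
          rwa [← h] at h9)
        -- edge k changes coordinate l only
        have hch : ∀ k' a : Fin N, a ≠ q.symm k' → vert (e, o, q) (k'+1) a = vert (e, o, q) k' a := by
          intro k' a ha
          apply vert_succ_of_ne
          intro h; apply ha; rw [← h]; simp
        by_cases hbl : b l = b k
        · -- look at edge l
          apply hk l
          have hql : q l = k := by rw [hl]; simp
          have hol : ∀ m : ℕ, (k : ℕ) < m → vert (e, o, q) m l = o l := by
            intro m hm; simp only [vert, hql]; rw [if_pos hm]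
          have hlk' : (k : ℕ) < l := hlk
          obtain ⟨_, _, _, _, ⟨r, h5⟩, h6⟩ := hσ l
          simp only at h5 h6
          have hol0 : o l ≠ 0 := by lia
          unfold ep
          rw [hol _ hlk', hol _ (by lia), if_neg hol0, if_neg hol0]
          congr 1
          apply Finset.sum_congr rfl
          intro i hi
          congr 1
          apply tau_congr
          intro a ha
          symm
          apply hch
          rintro rfl
          have h1 := hb (hsym l hlk.le)
          have := Finset.mem_range.1 hi
          lia
        · apply hk k
          have hbl' : b k < b l := lt_of_le_of_ne (hb hlk.le) (Ne.symm hbl)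
          have ht : ∀ i, i ≤ b k → tau b M i (vert (e, o, q) k) = tau b M i (vert (e, o, q) (k+1)) := by
            intro i hi
            apply tau_congr
            intro a ha
            symm
            apply hch
            rintro rfl
            rw [← hl] at ha
            lia
          unfold ep
          rw [hch k k (by rw [← hl]; exact hlk.ne), ht _ le_rfl]
          congr 1
          apply Finset.sum_congr rfl
          intro i hi
          rw [ht i (Finset.mem_range.1 hi).le]
    have hq' : q = Equiv.refl _ := by
      ext k; rw [hq k k rfl]; rfl
    subst hq'
    have hch : ∀ k a : Fin N, a ≠ k → vert (e, o, Equiv.refl _) (k+1) a = vert (e, o, Equiv.refl _) k a := by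
      intro k a ha
      apply vert_succ_of_ne
      exact ha
    have hvk : ∀ k : Fin N, vert (e, o, Equiv.refl _) k k = e k := by intro k; simp [vert]
    have hvk1 : ∀ k : Fin N, vert (e, o, Equiv.refl _) (k+1) k = o k := by intro k; simp [vert]
    have hsum : ∀ k : Fin N, ∑ i ∈ Finset.range (b k), W k i * tau b M i (vert (e, o, Equiv.refl _) k)
        = ∑ i ∈ Finset.range (b k), W k i * tau b M i (vert (e, o, Equiv.refl _) (k+1)) := by
      intro k
      apply Finset.sum_congr rfl
      intro i hi
      congr 1
      apply tau_congr
      intro a ha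
      symm
      apply hch
      rintro rfl
      have := Finset.mem_range.1 hi
      lia
    have he : ∀ k, e k = 0 := by
      intro k
      by_contra h0
      apply hk k
      unfold ep
      rw [hsum k, hvk, hvk1]
      obtain ⟨_, _, _, _, ⟨r, h5⟩, h6⟩ := hσ k
      simp only at h5 h6
      have : o k ≠ 0 := by lia
      rw [if_neg h0, if_neg this]
      have : 0 < e k ↔ 0 < o k := by lia
      simp only [this]
    have ho : ∀ k, o k = 1 := by
      intro k
      by_contra h1
      apply hk k
      unfold ep
      rw [hsum k, hvk, hvk1, he k]
      have h6 := (hσ k).2.2.2.2.2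
      simp only [he] at h6
      have h7 : o k = -1 := by lia
      rw [h7]
      have : tau b M (b k) (vert (e, o, Equiv.refl _) k) = 0 := by
        unfold tau
        rw [if_neg]
        rintro ⟨a, -, h, -⟩
        have h6 := (hσ a).2.2.2.2.2
        simp only [he] at h6
        simp only [vert, he] at h
        split_ifs at h <;> lia
      rw [this]; simp
    have : e = fun _ => 0 := funext he
    have : o = fun _ => 1 := funext ho
    simp [*]
  · intro h
    exfalso
    apply h
    rw [mem_Sx]
    intro a
    refine ⟨?_, ?_, ?_, ?_, ?_, ?_⟩ <;> simp <;> lia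

end ev

/-- Borsuk–Ulam type theorem for products of balls with antipodal boundary identifications. -/
theorem borsuk {N : ℕ} (b : Fin N → ℕ) (hb : Monotone b) (W : Fin N → ℕ → Bool)
    (hW1 : ∀ k, W k (b k) = true) (hW0 : ∀ k j, b k < j → W k j = false)
    (g : (Fin N → ℝ) → Fin N → ℝ) (hg : Continuous g)
    (heq : ∀ x : Fin N → ℝ, (∀ c, -1 ≤ x c ∧ x c ≤ 1) → ∀ a, (x a = 1 ∨ x a = -1) → ∀ k,
      g (bneg b (b a) x) k = if W k (b a) then - g x k else g x k) :
    ∃ x : Fin N → ℝ, (∀ c, -1 ≤ x c ∧ x c ≤ 1) ∧ g x = 0 := by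
  classical
  rcases Nat.eq_zero_or_pos N with hN | hN
  · subst hN
    exact ⟨0, fun c => c.elim0, funext fun c => c.elim0⟩
  by_contra! hcon
  let K : Set (Fin N → ℝ) := Set.Icc (fun _ => -1) (fun _ => 1)
  have hK : IsCompact K := isCompact_Icc
  have hKmem : ∀ x, x ∈ K ↔ ∀ c, -1 ≤ x c ∧ x c ≤ 1 := by
    intro x; simp only [K, Set.mem_Icc, Pi.le_def]; exact forall_and.symm
  have hKne : K.Nonempty := ⟨0, by rw [hKmem]; intro c; simp⟩
  obtain ⟨x0, hx0, hmin⟩ := hK.exists_isMinOn hKne (hg.norm.continuousOn)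
  set c := ‖g x0‖ with hc
  have hcpos : 0 < c := by rw [hc, norm_pos_iff]; exact hcon x0 ((hKmem _).1 hx0)
  have hmin : ∀ x ∈ K, c ≤ ‖g x‖ := fun x hx => hmin hx
  have huc := hK.uniformContinuousOn_of_continuous hg.continuousOn
  rw [Metric.uniformContinuousOn_iff] at huc
  obtain ⟨δ, hδ, huc⟩ := huc c hcpos
  obtain ⟨m, hm⟩ := exists_nat_gt (1 / δ)
  have hm0 : 0 < m := by
    have : (0 : ℝ) < m := lt_trans (by positivity) hm
    exact_mod_cast this
  let M : ℤ := 2 * m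
  have hM2 : 2 ≤ M := by simp only [M]; lia
  have hM : Even M := ⟨m, by simp only [M]; ring⟩
  have hMR : (0 : ℝ) < (M : ℝ) := by exact_mod_cast (by lia : 0 < M)
  have hMδ : 1 / (M : ℝ) < δ := by
    rw [div_lt_iff₀ hMR]
    rw [div_lt_iff₀ hδ] at hm
    simp only [M]; push_cast
    nlinarith
  let sc : (Fin N → ℤ) → (Fin N → ℝ) := fun v a => (v a : ℝ) / M
  let W' : Fin N → ℕ → ZMod 2 := fun k j => if W k j then 1 else 0
  have hep := ep_eqv b M (by lia) W' (fun k => by simp [W', hW1]) (fun k j h => by simp [W', hW0 k j h])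
  let ε : Fin N → (Fin N → ℤ) → ZMod 2 := fun k v =>
    if 0 < g (sc v) k then 1 else if g (sc v) k < 0 then 0 else ep b M W' k v
  have hsc : ∀ v : Fin N → ℤ, (∀ c, -M ≤ v c ∧ v c ≤ M) → sc v ∈ K := by
    intro v hv
    rw [hKmem]
    intro c
    simp only [sc]
    rw [le_div_iff₀ hMR, div_le_iff₀ hMR]
    have := hv c
    constructor
    · have : ((-M : ℤ) : ℝ) ≤ (v c : ℝ) := by exact_mod_cast this.1
      push_cast at this; linarith
    · have : (v c : ℝ) ≤ (M : ℝ) := by exact_mod_cast this.2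
      linarith
  have hε : ∀ k, Eqv b M (W' k) (ε k) := by
    intro k v hv a ha
    have h1 : sc (bneg b (b a) v) = bneg b (b a) (sc v) := by
      funext c; simp only [sc, bneg]; split_ifs <;> push_cast <;> ring
    have h2 : sc v a = 1 ∨ sc v a = -1 := by
      simp only [sc]
      rcases ha with ha | ha
      · left; rw [ha]; field_simp
      · right; rw [ha]; push_cast; field_simp
    have h3 := heq (sc v) ((hKmem _).1 (hsc v hv)) a h2 k
    have h4 := hep k v hv a ha
    simp only [ε, h1, h3, h4]
    cases hWk : W k (b a)
    · simp [W', hWk]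
    · have : W' k (b a) = 1 := by simp [W', hWk]
      rw [this]
      simp only [if_true]
      rcases lt_trichotomy (g (sc v) k) 0 with h | h | h
      · rw [if_pos (by linarith), if_neg (by linarith), if_pos h]; simp
      · simp [h]
      · rw [if_neg (by linarith), if_pos (by linarith), if_pos h]; decide
  have h1 := SS_eq b M hM (by lia) hN W' (ep b M W') ε hep hε
  rw [SS_ep b hb M hM2] at h1
  apply zero_ne_one (α := ZMod 2)
  rw [← h1]
  symm
  apply Finset.sum_eq_zero
  intro σ hσ
  have hv : ∀ l, sc (vert σ l) ∈ K := fun l => hsc _ (vert_bd hσ l)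
  obtain ⟨k, hk⟩ : ∃ k, c ≤ |g (sc (vert σ 0)) k| := by
    by_contra! h
    have : ‖g (sc (vert σ 0))‖ < c := (pi_norm_lt_iff hcpos).2 h
    exact absurd (hmin _ (hv 0)) (not_le.2 this)
  have hclose : ∀ l, |g (sc (vert σ l)) k - g (sc (vert σ 0)) k| < c := by
    intro l
    have : dist (sc (vert σ l)) (sc (vert σ 0)) < δ := by
      refine lt_of_le_of_lt ?_ hMδ
      rw [dist_pi_le_iff (by positivity)]
      intro a
      simp only [sc]
      rw [Real.dist_eq, ← sub_div, abs_div, abs_of_pos hMR]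
      gcongr
      have := (mem_Sx.1 hσ a).2.2.2.2.2
      have : |vert σ l a - vert σ 0 a| ≤ 1 := by
        rw [abs_le]
        simp only [vert]
        split_ifs <;> lia
      exact_mod_cast this
    have := huc _ (hv l) _ (hv 0) this
    rw [dist_pi_lt_iff hcpos] at this
    exact this k
  apply Finset.prod_eq_zero (Finset.mem_univ k)
  have hs : ∀ l, ε k (vert σ l) = if 0 < g (sc (vert σ 0)) k then 1 else 0 := by
    intro l
    have := abs_lt.1 (hclose l)
    simp only [ε]
    rcases le_abs.1 hk with h | h
    · rw [if_pos (by linarith), if_pos (by linarith)]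
    · rw [if_neg (by linarith), if_pos (by linarith), if_neg (by linarith)]
  rw [hs, hs]
  exact z2 _

end PP

namespace PP
lemma choose_ge (n d : ℕ) (hn : 1 ≤ n) : d ^ n + n.factorial ≤ n.factorial * (n + d).choose n := by
  have h : ∀ n, 1 ≤ n → d ^ n + n.factorial ≤ (d+1).ascFactorial n := by
    intro n hn
    induction n, hn using Nat.le_induction with
    | base => simp [Nat.ascFactorial]
    | succ k hk ih =>
      rw [Nat.ascFactorial_succ, Nat.factorial_succ, pow_succ]
      have h1 : (d + 1 + k) * (d ^ k + k.factorial) ≤ (d+1+k) * (d+1).ascFactorial k := Nat.mul_le_mul_left _ ih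
      nlinarith [Nat.zero_le (d^k), Nat.zero_le k.factorial, Nat.zero_le (k * d^k), Nat.zero_le (d * k.factorial)]
  have := h n hn
  rwa [Nat.ascFactorial_eq_factorial_mul_choose, add_comm d n] at this

lemma degrees (n D : ℕ) (hn : 1 ≤ n) (hD : 1 ≤ D) :
    ∃ (s : ℕ) (d : ℕ → ℕ), ∑ j ∈ Finset.range s, d j ≤ D ∧ (∀ j, 2^j + 1 ≤ (n + d j).choose n) ∧
      ((2:ℝ)^s)⁻¹ ≤ (2 ^ (n + 1) * (Nat.factorial n : ℝ) / ((2 : ℝ) ^ ((1 : ℝ) / n) - 1) ^ n) *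
             ((D : ℝ) ^ n)⁻¹ := by
  classical
  have hn0 : n ≠ 0 := by lia
  have hnR : (0:ℝ) < n := by exact_mod_cast hn
  set q : ℝ := (2 : ℝ) ^ ((1 : ℝ) / n) with hq
  have hqn : q ^ n = 2 := by
    rw [hq, one_div, Real.rpow_inv_natCast_pow (by norm_num) hn0]
  have hq1 : 1 < q := Real.one_lt_rpow (by norm_num) (by positivity)
  set a : ℝ := (n.factorial : ℝ) ^ ((1 : ℝ) / n) with ha
  have han : a ^ n = n.factorial := by
    rw [ha, one_div, Real.rpow_inv_natCast_pow (by positivity) hn0]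
  have ha1 : 1 ≤ a := Real.one_le_rpow (by exact_mod_cast Nat.factorial_pos n) (by positivity)
  have hDR : (0:ℝ) < D := by exact_mod_cast hD
  have hfR : (1:ℝ) ≤ n.factorial := by exact_mod_cast Nat.factorial_pos n
  have hex : ∃ s : ℕ, (D:ℝ)^n * (q-1)^n < 2^n * n.factorial * 2^(s+1) := by
    obtain ⟨s, hs⟩ := pow_unbounded_of_one_lt ((D:ℝ)^n * (q-1)^n) (one_lt_two)
    refine ⟨s, hs.trans_le ?_⟩
    have h1 : (1:ℝ) ≤ 2^n := one_le_pow₀ (by norm_num)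
    have h2 : (1:ℝ) ≤ 2^n * n.factorial := one_le_mul_of_one_le_of_one_le h1 hfR
    have h3 : (0:ℝ) < 2^s := by positivity
    rw [pow_succ]; nlinarith
  have hs := Nat.find_spec hex
  set s := Nat.find hex with hsdef
  refine ⟨s, fun j => ⌈a * q ^ j⌉₊, ?_, ?_, ?_⟩
  · rcases Nat.eq_zero_or_pos s with h0 | h0
    · rw [h0]; simp
    · have hmin := Nat.find_min hex (m := s - 1) (by lia)
      rw [not_lt, Nat.sub_add_cancel h0] at hmin
      have h1 : (2 * a * q^s)^n ≤ (D * (q-1))^n := by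
        calc (2 * a * q^s)^n = 2^n * a^n * (q^n)^s := by ring
          _ = 2^n * n.factorial * 2^s := by rw [han, hqn]
          _ ≤ _ := hmin
          _ = _ := (mul_pow _ _ _).symm
      have h2 : 2 * a * q^s ≤ D * (q-1) :=
        le_of_pow_le_pow_left₀ hn0 (mul_nonneg hDR.le (by linarith)) h1
      have h3 : ∀ j, ((⌈a * q ^ j⌉₊ : ℕ) : ℝ) ≤ 2 * a * q^j := by
        intro j
        have h4 : 1 ≤ q^j := one_le_pow₀ hq1.le
        have h5 := (Nat.ceil_lt_add_one (show 0 ≤ a * q^j by positivity)).le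
        nlinarith
      have h6 : ((∑ j ∈ Finset.range s, ⌈a * q ^ j⌉₊ : ℕ) : ℝ) ≤ D := by
        push_cast
        refine (Finset.sum_le_sum fun j _ => h3 j).trans ?_
        rw [← Finset.mul_sum, geom_sum_eq hq1.ne', ← mul_div_assoc, div_le_iff₀ (by linarith)]
        nlinarith
      exact_mod_cast h6
  · intro j
    have h1 : (n.factorial * 2^j : ℕ) ≤ ⌈a * q ^ j⌉₊ ^ n := by
      have : ((n.factorial * 2^j : ℕ) : ℝ) ≤ (⌈a * q ^ j⌉₊ : ℝ) ^ n := by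
        calc ((n.factorial * 2^j : ℕ) : ℝ) = a^n * (q^n)^j := by rw [han, hqn]; push_cast; rfl
          _ = (a * q^j)^n := by ring
          _ ≤ _ := pow_le_pow_left₀ (by positivity) (Nat.le_ceil _) n
      exact_mod_cast this
    have h2 := choose_ge n ⌈a * q ^ j⌉₊ hn
    have h3 : n.factorial * (2^j+1) ≤ n.factorial * (n + ⌈a * q ^ j⌉₊).choose n := by
      rw [mul_add, mul_one]; lia
    exact Nat.le_of_mul_le_mul_left h3 (Nat.factorial_pos n)
  · have h1 : 0 < (q-1)^n := pow_pos (by linarith) n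
    have h2 : 0 < (D:ℝ)^n := by positivity
    rw [← div_eq_mul_inv, div_div, inv_eq_one_div, div_le_div_iff₀ (by positivity) (by positivity)]
    calc 1 * ((q-1)^n * (D:ℝ)^n) = (D:ℝ)^n * (q-1)^n := by ring
      _ ≤ _ := hs.le
      _ = _ := by ring

lemma exists_mons (n d K : ℕ) (h : K ≤ (n+d).choose n) :
    ∃ f : ℕ → (Fin n →₀ ℕ), Set.InjOn f {i | i < K} ∧ ∀ i, (f i).degree ≤ d := by
  classical
  let e := Sym.equivNatSumOfFintype (Fin (n+1)) d
  have hc : Fintype.card (Sym (Fin (n+1)) d) = (n+d).choose n := by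
    rw [Sym.card_sym_eq_choose, Fintype.card_fin]
    rw [show n + 1 + d - 1 = n + d by lia]
    exact (Nat.choose_symm_add).symm
  let v := Fintype.equivFinOfCardEq hc
  let f : ℕ → (Fin n →₀ ℕ) := fun i => if hi : i < (n+d).choose n then
    Finsupp.equivFunOnFinite.symm (fun c => (e (v.symm ⟨i, hi⟩)).1 c.succ) else 0
  refine ⟨f, ?_, ?_⟩
  · intro i hi j hj hij
    have hi' : i < (n+d).choose n := lt_of_lt_of_le hi h
    have hj' : j < (n+d).choose n := lt_of_lt_of_le hj h
    simp only [f, dif_pos hi', dif_pos hj'] at hij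
    have h1 := Finsupp.equivFunOnFinite.symm.injective hij
    have h2 : e (v.symm ⟨i, hi'⟩) = e (v.symm ⟨j, hj'⟩) := by
      have a1 := (e (v.symm ⟨i, hi'⟩)).2
      have a2 := (e (v.symm ⟨j, hj'⟩)).2
      rw [Fin.sum_univ_succ] at a1 a2
      have a3 : ∀ c : Fin n, (e (v.symm ⟨i, hi'⟩)).1 c.succ = (e (v.symm ⟨j, hj'⟩)).1 c.succ := fun c => congrFun h1 c
      rw [Finset.sum_congr rfl (fun c _ => a3 c)] at a1
      apply Subtype.ext
      funext c
      refine Fin.cases ?_ a3 c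
      lia
    have h3 := v.symm.injective (e.injective h2)
    simpa using h3
  · intro i
    by_cases hi : i < (n+d).choose n
    · simp only [f, dif_pos hi]
      have a1 := (e (v.symm ⟨i, hi⟩)).2
      rw [Fin.sum_univ_succ] at a1
      rw [Finsupp.degree_eq_sum]
      simp only [Finsupp.equivFunOnFinite_symm_apply_apply]
      lia
    · simp [f, dif_neg hi]
end PP

namespace PP
open MvPolynomial

def bl (s : ℕ) (k : Fin (2^s-1)) : ℕ := Nat.log2 (k+1)
def Wt (s : ℕ) (k : Fin (2^s-1)) (j : ℕ) : Bool := Nat.testBit (k+1) j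

lemma bl_lt (s : ℕ) (k : Fin (2^s-1)) : bl s k < s := by
  unfold bl
  rw [Nat.log2_lt (by lia)]
  have := k.2
  lia

lemma bl_mono (s : ℕ) : Monotone (bl s) := by
  intro k l h
  unfold bl
  rw [Nat.log2_eq_log_two, Nat.log2_eq_log_two]
  apply Nat.log_mono_right
  have : (k:ℕ) ≤ l := h
  lia

lemma Wt1 (s : ℕ) (k : Fin (2^s-1)) : Wt s k (bl s k) = true := Nat.testBit_log2 (by lia)

lemma Wt0 (s : ℕ) (k : Fin (2^s-1)) (j : ℕ) (h : bl s k < j) : Wt s k j = false := by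
  apply Nat.testBit_lt_two_pow
  exact (Nat.log2_lt (by lia)).1 h

lemma Wt_surj (s : ℕ) (f : Fin s → Bool) (hf : f ≠ fun _ => false) :
    ∃ k, ∀ j : Fin s, Wt s k j = f j := by
  have h1 : Nat.ofBits f ≠ 0 := by
    intro h
    apply hf
    funext j
    have := Nat.testBit_ofBits_lt f j j.2
    rw [h] at this
    simpa using this.symm
  have h2 := Nat.ofBits_lt_two_pow f
  refine ⟨⟨Nat.ofBits f - 1, by lia⟩, fun j => ?_⟩
  unfold Wt
  simp only
  rw [Nat.sub_add_cancel (by lia)]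
  exact Nat.testBit_ofBits_lt f j j.2

lemma bl_range (s : ℕ) (k : Fin (2^s-1)) : 2^(bl s k) ≤ (k:ℕ)+1 ∧ (k:ℕ)+1 < 2^(bl s k + 1) := by
  unfold bl
  exact ⟨Nat.log2_self_le (by lia), Nat.lt_log2_self⟩

lemma family (n s : ℕ) (d : ℕ → ℕ) (hd : ∀ j, 2^j + 1 ≤ (n + d j).choose n) :
    ∃ p : ℕ → (Fin (2^s-1) → ℝ) → MvPolynomial (Fin n) ℝ,
      (∀ j y, p j y ≠ 0) ∧ (∀ j y, (p j y).totalDegree ≤ d j) ∧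
      (∀ j x, Continuous fun y => eval x (p j y)) ∧
      (∀ j y, (∃ a, bl s a = j ∧ (y a = 1 ∨ y a = -1)) → p j (bneg (bl s) j y) = - p j y) ∧
      (∀ i j y, i ≠ j → p i (bneg (bl s) j y) = p i y) := by
  classical
  choose f hf1 hf2 using fun j => exists_mons n (d j) (2^j+1) (hd j)
  let p : ℕ → (Fin (2^s-1) → ℝ) → MvPolynomial (Fin n) ℝ := fun j y =>
    (∑ k, if bl s k = j then monomial (f j (k + 1 - 2^j)) (y k) else 0) +
      monomial (f j (2^j)) (∏ k, if bl s k = j then 1 - y k ^ 2 else 1)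
  refine ⟨p, ?_, ?_, ?_, ?_, ?_⟩
  · intro j y h
    have hy : ∀ k, bl s k = j → y k = 0 := by
      intro k hk
      have h1 := congrArg (coeff (f j (k+1-2^j))) h
      have hr := bl_range s k
      rw [hk, pow_succ] at hr
      simp only [p, coeff_add, coeff_sum, coeff_zero] at h1
      rw [Finset.sum_eq_single k, if_pos hk, coeff_monomial, if_pos rfl, coeff_monomial, if_neg] at h1
      · simpa using h1
      · intro h2
        have := hf1 j (show 2^j < 2^j+1 by lia) (show (k:ℕ)+1-2^j < 2^j+1 by lia) h2
        lia
      · intro l _ hl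
        split_ifs with hl'
        · have hr' := bl_range s l
          rw [hl', pow_succ] at hr'
          rw [coeff_monomial, if_neg]
          intro h2
          have := hf1 j (show (l:ℕ)+1-2^j < 2^j+1 by lia) (show (k:ℕ)+1-2^j < 2^j+1 by lia) h2
          apply hl
          apply Fin.ext
          lia
        · simp
      · intro h; exact absurd (Finset.mem_univ _) h
    have h1 := congrArg (coeff (f j (2^j))) h
    simp only [p, coeff_add, coeff_sum, coeff_zero] at h1
    rw [Finset.sum_eq_zero, coeff_monomial, if_pos rfl, Finset.prod_eq_one] at h1
    · simp at h1
    · intro k _; split_ifs with hk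
      · rw [hy k hk]; simp
      · rfl
    · intro k _; split_ifs with hk
      · rw [hy k hk]; simp
      · simp
  · intro j y
    have hm : ∀ i c, (monomial (f j i) c : MvPolynomial (Fin n) ℝ).totalDegree ≤ d j := by
      intro i c
      refine (totalDegree_monomial_le _ _).trans ?_
      refine le_trans (le_of_eq ?_) (hf2 j i)
      rfl
    refine (totalDegree_add _ _).trans (max_le ?_ (hm _ _))
    apply totalDegree_finsetSum_le
    intro k _
    split_ifs
    · exact hm _ _
    · simp
  · intro j x
    have : (fun y => eval x (p j y)) = fun y => (∑ k, if bl s k = j then y k * eval x (monomial (f j (k + 1 - 2^j)) 1)  else 0) +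
      (∏ k, if bl s k = j then 1 - y k ^ 2 else 1) * eval x (monomial (f j (2^j)) 1) := by
      funext y
      simp only [p, map_add, map_sum, apply_ite (eval x), map_zero, eval_monomial, one_mul]
    rw [this]
    apply Continuous.add
    · apply continuous_finset_sum
      intro k _
      split_ifs <;> fun_prop
    · apply Continuous.mul _ continuous_const
      apply continuous_finset_prod
      intro k _
      split_ifs <;> fun_prop
  · rintro j y ⟨a, ha, hya⟩
    have h1 : (∏ k, if bl s k = j then 1 - bneg (bl s) j y k ^ 2 else 1) = 0 := by
      apply Finset.prod_eq_zero (Finset.mem_univ a)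
      rw [if_pos ha]; unfold bneg; rw [if_pos ha]
      rcases hya with h | h <;> rw [h] <;> norm_num
    have h2 : (∏ k, if bl s k = j then 1 - y k ^ 2 else 1) = 0 := by
      apply Finset.prod_eq_zero (Finset.mem_univ a)
      rw [if_pos ha]
      rcases hya with h | h <;> rw [h] <;> norm_num
    simp only [p]
    rw [h1, h2, map_zero, add_zero, add_zero, ← Finset.sum_neg_distrib]
    apply Finset.sum_congr rfl
    intro k _
    split_ifs with hk
    · unfold bneg; rw [if_pos hk, map_neg]
    · simp
  · intro i j y hij
    have h : ∀ k, bl s k = i → bneg (bl s) j y k = y k := by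
      intro k hk
      unfold bneg; rw [if_neg]; rw [hk]; exact hij
    simp only [p]
    congr 1
    · apply Finset.sum_congr rfl
      intro k _
      split_ifs with hk
      · rw [h k hk]
      · rfl
    · congr 1
      apply Finset.prod_congr rfl
      intro k _
      split_ifs with hk
      · rw [h k hk]
      · rfl

/-- character -/
noncomputable def chi {s : ℕ} (f : Fin s → Bool) (σ : Fin s → ℤˣ) : ℝ :=
  ∏ j, if f j then ((σ j : ℤ) : ℝ) else 1

lemma orth {s : ℕ} (F : (Fin s → ℤˣ) → ℝ)
    (h : ∀ f : Fin s → Bool, f ≠ (fun _ => false) → ∑ σ, chi f σ * F σ = 0) (σ : Fin s → ℤˣ) :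
    2^s * F σ = ∑ τ, F τ := by
  classical
  have h1 : ∀ τ, ∑ f, chi f σ * chi f τ = if τ = σ then 2^s else 0 := by
    intro τ
    have : ∀ f, chi f σ * chi f τ = ∏ j, if f j then ((σ j : ℤ) : ℝ) * ((τ j : ℤ) : ℝ) else 1 := by
      intro f
      unfold chi
      rw [← Finset.prod_mul_distrib]
      apply Finset.prod_congr rfl
      intro j _
      split_ifs <;> simp
    simp only [this]
    rw [← Fintype.prod_sum (fun (j : Fin s) (e : Bool) => if e then ((σ j : ℤ) : ℝ) * ((τ j : ℤ) : ℝ) else 1)]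
    simp only [Fintype.sum_bool, if_true, Bool.false_eq_true, if_false]
    split_ifs with hτ
    · subst hτ
      rw [Finset.prod_congr rfl (g := fun _ => (2:ℝ))]
      · simp
      · intro j _
        rcases Int.units_eq_one_or (τ j) with h | h <;> rw [h] <;> norm_num
    · obtain ⟨j, hj⟩ := Function.ne_iff.1 hτ
      apply Finset.prod_eq_zero (Finset.mem_univ j)
      rcases Int.units_eq_one_or (τ j) with h | h <;> rcases Int.units_eq_one_or (σ j) with h' | h' <;>
        rw [h, h'] at hj ⊢ <;> simp at hj ⊢
  calc 2^s * F σ = ∑ τ, (if τ = σ then 2^s else 0) * F τ := by simp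
    _ = ∑ τ, ∑ f, chi f σ * (chi f τ * F τ) := by
        apply Finset.sum_congr rfl
        intro τ _
        rw [← h1, Finset.sum_mul]
        simp only [mul_assoc]
    _ = ∑ f, chi f σ * ∑ τ, chi f τ * F τ := by
        rw [Finset.sum_comm]
        simp only [Finset.mul_sum]
    _ = chi (fun _ => false) σ * ∑ τ, chi (fun _ => false) τ * F τ := by
        apply Finset.sum_eq_single
        · intro f _ hf; rw [h f hf, mul_zero]
        · intro h; exact absurd (Finset.mem_univ _) h
    _ = _ := by simp [chi]

lemma chi_flip {s : ℕ} (f : Fin s → Bool) (σ : Fin s → ℤˣ) (j : Fin s) :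
    chi f (σ * Pi.mulSingle j (-1)) = if f j then - chi f σ else chi f σ := by
  classical
  have : chi f (σ * Pi.mulSingle j (-1)) = chi f (Pi.mulSingle j (-1)) * chi f σ := by
    unfold chi
    rw [← Finset.prod_mul_distrib]
    apply Finset.prod_congr rfl
    intro i _
    split_ifs
    · simp; ring
    · simp
  rw [this]
  have : chi f (Pi.mulSingle j (-1)) = if f j then -1 else 1 := by
    unfold chi
    rw [Finset.prod_eq_single j]
    · simp
    · intro i _ hi; simp [Pi.mulSingle_eq_of_ne hi]
    · intro h; exact absurd (Finset.mem_univ _) h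
  rw [this]
  split_ifs <;> simp
end PP

namespace PP
open MvPolynomial Filter Topology

lemma cont_eval {n : ℕ} (q : MvPolynomial (Fin n) ℝ) : Continuous fun x : Fin n → ℝ => eval x q :=
  MvPolynomial.continuous_eval q

lemma sign_const_s2 {X : Type*} [TopologicalSpace X] {S : Set X} (hS : IsPreconnected S) (f : X → ℝ)
    (hf : Continuous f) (h0 : ∀ x ∈ S, f x ≠ 0) {a b : X} (ha : a ∈ S) (hb : b ∈ S) (h : 0 < f a) : 0 < f b := by
  by_contra h'
  have h' := not_lt.1 h'
  obtain ⟨x, hx, hx0⟩ := hS.intermediate_value hb ha hf.continuousOn ⟨h', h.le⟩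
  exact h0 x hx hx0

/-- nonvanishing set -/
def nz {n : ℕ} (q : MvPolynomial (Fin n) ℝ) : Set (Fin n → ℝ) := {y | eval y q ≠ 0}

lemma sign_comp {n s : ℕ} (p : Fin s → MvPolynomial (Fin n) ℝ) (σ : Fin s → ℤˣ) (x z : Fin n → ℝ)
    (hz : z ∈ connectedComponentIn (nz (∏ j, p j)) x) (hx : ∀ j, 0 < ((σ j : ℤ) : ℝ) * eval x (p j)) :
    ∀ j, 0 < ((σ j : ℤ) : ℝ) * eval z (p j) := by
  intro j
  have hxm : x ∈ nz (∏ j, p j) := by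
    simp only [nz, Set.mem_setOf_eq, map_prod]
    refine Finset.prod_ne_zero_iff.2 fun i _ h => ?_
    have := hx i
    rw [h, mul_zero] at this
    exact lt_irrefl _ this
  refine sign_const_s2 (isPreconnected_connectedComponentIn (F := nz (∏ j, p j)) (x := x))
    (fun z => ((σ j : ℤ) : ℝ) * eval z (p j)) (continuous_const.mul (cont_eval _)) ?_
    (mem_connectedComponentIn hxm) hz (hx j)
  intro w hw
  have h1 := connectedComponentIn_subset _ _ hw
  simp only [nz, Set.mem_setOf_eq, map_prod] at h1
  have h2 := Finset.prod_ne_zero_iff.1 h1 j (Finset.mem_univ _)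
  refine mul_ne_zero ?_ h2
  exact_mod_cast (σ j).ne_zero

open Classical in
lemma count_le {n s : ℕ} (p : Fin s → MvPolynomial (Fin n) ℝ) (γ : Set (Fin n → ℝ)) (B : ℝ)
    (hB : {S : Set (Fin n → ℝ) | ∃ x ∈ γ, eval x (∏ j, p j) ≠ 0 ∧
          S = connectedComponentIn {y : Fin n → ℝ | eval y (∏ j, p j) ≠ 0} x}.Finite ∧
        ({S : Set (Fin n → ℝ) | ∃ x ∈ γ, eval x (∏ j, p j) ≠ 0 ∧
          S = connectedComponentIn {y : Fin n → ℝ | eval y (∏ j, p j) ≠ 0} x}.ncard : ℝ) ≤ B) :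
    ((Finset.univ.filter fun σ : Fin s → ℤˣ => ∃ x ∈ γ, ∀ j, 0 < ((σ j : ℤ) : ℝ) * eval x (p j)).card : ℝ) ≤ B := by
  refine le_trans ?_ hB.2
  rw [← Set.ncard_coe_finset]
  refine Nat.cast_le.2 ?_
  have hc : ∀ σ : Fin s → ℤˣ, ∃ x : Fin n → ℝ, (∃ x ∈ γ, ∀ j, 0 < ((σ j : ℤ) : ℝ) * eval x (p j)) →
      x ∈ γ ∧ ∀ j, 0 < ((σ j : ℤ) : ℝ) * eval x (p j) := by
    intro σ
    by_cases h : ∃ x ∈ γ, ∀ j, 0 < ((σ j : ℤ) : ℝ) * eval x (p j)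
    · obtain ⟨x, hx⟩ := h
      exact ⟨x, fun _ => hx⟩
    · exact ⟨0, fun h' => absurd h' h⟩
  choose X hX using hc
  have hmem : ∀ σ : Fin s → ℤˣ, (∃ x ∈ γ, ∀ j, 0 < ((σ j : ℤ) : ℝ) * eval x (p j)) → X σ ∈ nz (∏ j, p j) := by
    intro σ h
    have := (hX σ h).2
    simp only [nz, Set.mem_setOf_eq, map_prod]
    refine Finset.prod_ne_zero_iff.2 fun i _ h => ?_
    have := this i
    rw [h, mul_zero] at this
    exact lt_irrefl _ this
  refine Set.ncard_le_ncard_of_injOn (fun σ => connectedComponentIn (nz (∏ j, p j)) (X σ)) ?_ ?_ hB.1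
  · intro σ hσ
    have hσ : ∃ x ∈ γ, ∀ j, 0 < ((σ j : ℤ) : ℝ) * eval x (p j) := by simpa using hσ
    exact ⟨X σ, (hX σ hσ).1, hmem σ hσ, rfl⟩
  · intro σ hσ τ hτ h
    have hσ : ∃ x ∈ γ, ∀ j, 0 < ((σ j : ℤ) : ℝ) * eval x (p j) := by simpa using hσ
    have hτ : ∃ x ∈ γ, ∀ j, 0 < ((τ j : ℤ) : ℝ) * eval x (p j) := by simpa using hτ
    have h : connectedComponentIn (nz (∏ j, p j)) (X σ) = connectedComponentIn (nz (∏ j, p j)) (X τ) := h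
    have h1 : X τ ∈ connectedComponentIn (nz (∏ j, p j)) (X σ) := by
      rw [h]; exact mem_connectedComponentIn (hmem τ hτ)
    have h2 := sign_comp p σ _ _ h1 (hX σ hσ).2
    have h3 := (hX τ hτ).2
    funext j
    have h2 := h2 j
    have h3 := h3 j
    rcases Int.units_eq_one_or (τ j) with h | h <;> rcases Int.units_eq_one_or (σ j) with h' | h' <;>
        rw [h] at h3 ⊢ <;> rw [h'] at h2 ⊢ <;> push_cast at h2 h3 <;> exfalso <;> linarith

lemma dense_seq {n : ℕ} (γ : Set (Fin n → ℝ)) : ∃ A : ℕ → Finset (Fin n → ℝ), (∀ m, ∀ x ∈ A m, x ∈ γ) ∧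
    ∀ U : Set (Fin n → ℝ), IsOpen U → (γ ∩ U).Nonempty → ∃ x ∈ U, ∀ᶠ m in atTop, x ∈ A m := by
  classical
  by_cases h : Nonempty γ
  · refine ⟨fun m => (Finset.range m).image fun i => (TopologicalSpace.denseSeq γ i : Fin n → ℝ), ?_, ?_⟩
    · intro m x hx
      obtain ⟨i, _, rfl⟩ := Finset.mem_image.1 hx
      exact (TopologicalSpace.denseSeq γ i).2
    · rintro U hU ⟨x, hx, hxU⟩
      obtain ⟨i, hi⟩ := (TopologicalSpace.denseRange_denseSeq γ).exists_mem_open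
        (hU.preimage continuous_subtype_val) ⟨⟨x, hx⟩, hxU⟩
      refine ⟨_, hi, ?_⟩
      filter_upwards [eventually_gt_atTop i] with m hm
      exact Finset.mem_image.2 ⟨i, Finset.mem_range.2 hm, rfl⟩
  · refine ⟨fun _ => ∅, by simp, ?_⟩
    rintro U _ ⟨x, hx, _⟩
    exact absurd ⟨⟨x, hx⟩⟩ h

/-- smoothed indicator -/
noncomputable def TT {s N n : ℕ} (p : ℕ → (Fin N → ℝ) → MvPolynomial (Fin n) ℝ)
    (A : Finset (Fin n → ℝ)) (m : ℕ) (σ : Fin s → ℤˣ) (y : Fin N → ℝ) : ℝ :=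
  min 1 (m * ∑ x ∈ A, ∏ j : Fin s, max 0 (((σ j : ℤ) : ℝ) * eval x (p j y)))

section
variable {s N n : ℕ} (p : ℕ → (Fin N → ℝ) → MvPolynomial (Fin n) ℝ)
    (A : Finset (Fin n → ℝ)) (m : ℕ) (σ : Fin s → ℤˣ) (y : Fin N → ℝ)

lemma TT_le_one : TT p A m σ y ≤ 1 := min_le_left _ _

lemma TT_nonneg : 0 ≤ TT p A m σ y := by
  unfold TT
  refine le_min zero_le_one (mul_nonneg (Nat.cast_nonneg _) (Finset.sum_nonneg fun x _ => Finset.prod_nonneg fun j _ => le_max_left _ _))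

lemma TT_eq_zero (h : ¬ ∃ x ∈ A, ∀ j : Fin s, 0 < ((σ j : ℤ) : ℝ) * eval x (p j y)) : TT p A m σ y = 0 := by
  unfold TT
  rw [Finset.sum_eq_zero, mul_zero]
  · simp
  · intro x hx
    push Not at h
    obtain ⟨j, hj⟩ := h x hx
    exact Finset.prod_eq_zero (Finset.mem_univ j) (max_eq_left hj)

lemma TT_cont (hp : ∀ j x, Continuous fun y => eval x (p j y)) : Continuous (TT p A m σ) := by
  unfold TT
  refine continuous_const.min (continuous_const.mul (continuous_finsetSum _ fun x _ => continuous_finsetProd _ fun j _ => ?_))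
  exact continuous_const.max (continuous_const.mul (hp j x))
end

lemma step {n s : ℕ} (p : ℕ → (Fin (2^s-1) → ℝ) → MvPolynomial (Fin n) ℝ)
      (hp : ∀ j x, Continuous fun y => eval x (p j y))
      (h1 : ∀ j y, (∃ a, bl s a = j ∧ (y a = 1 ∨ y a = -1)) → p j (bneg (bl s) j y) = - p j y)
      (h2 : ∀ i j y, i ≠ j → p i (bneg (bl s) j y) = p i y)
      (Γ : Finset (Set (Fin n → ℝ))) (A : Set (Fin n → ℝ) → Finset (Fin n → ℝ)) (m : ℕ) :
    ∃ y : Fin (2^s-1) → ℝ, (∀ c, -1 ≤ y c ∧ y c ≤ 1) ∧ ∀ σ : Fin s → ℤˣ,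
      2^s * ∑ γ ∈ Γ, TT p (A γ) m σ y = ∑ τ : Fin s → ℤˣ, ∑ γ ∈ Γ, TT p (A γ) m τ y := by
  classical
  have hflip : ∀ (y : Fin (2^s-1) → ℝ) a, (y a = 1 ∨ y a = -1) → ∀ (σ : Fin s → ℤˣ) (C : Finset (Fin n → ℝ)),
      TT p C m σ (bneg (bl s) (bl s a) y) = TT p C m (σ * Pi.mulSingle ⟨bl s a, bl_lt s a⟩ (-1)) y := by
    intro y a ha σ C
    unfold TT
    congr 2
    apply Finset.sum_congr rfl
    intro x _
    apply Finset.prod_congr rfl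
    intro j _
    congr 1
    by_cases hj : (j : ℕ) = bl s a
    · have : j = ⟨bl s a, bl_lt s a⟩ := Fin.ext hj
      rw [hj, h1 _ _ ⟨a, rfl, ha⟩, ← this]
      simp
    · rw [h2 _ _ _ hj]
      have : j ≠ ⟨bl s a, bl_lt s a⟩ := fun h => hj (by rw [h])
      rw [Pi.mul_apply, Pi.mulSingle_eq_of_ne this, mul_one]
  obtain ⟨y, hy, hg⟩ := borsuk (bl s) (bl_mono s) (Wt s) (Wt1 s) (Wt0 s)
    (fun y k => ∑ σ : Fin s → ℤˣ, chi (fun j : Fin s => Wt s k j) σ * ∑ γ ∈ Γ, TT p (A γ) m σ y)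
    (by
      refine continuous_pi fun k => continuous_finsetSum _ fun σ _ => continuous_const.mul
        (continuous_finsetSum _ fun γ _ => TT_cont _ _ _ _ hp))
    (by
      intro y _ a ha k
      simp only [hflip y a ha]
      rw [← Equiv.sum_comp (Equiv.mulRight (Pi.mulSingle (⟨bl s a, bl_lt s a⟩ : Fin s) (-1 : ℤˣ)))]
      have hsq : ∀ σ : Fin s → ℤˣ, σ * Pi.mulSingle ⟨bl s a, bl_lt s a⟩ (-1) * Pi.mulSingle ⟨bl s a, bl_lt s a⟩ (-1) = σ := by
        intro σ
        rw [mul_assoc, ← Pi.mulSingle_mul]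
        simp
      simp only [Equiv.coe_mulRight, hsq, chi_flip]
      split_ifs with h
      · rw [← Finset.sum_neg_distrib]
        apply Finset.sum_congr rfl
        intro σ _; ring
      · rfl)
  refine ⟨y, hy, orth _ ?_⟩
  intro f hf
  obtain ⟨k, hk⟩ := Wt_surj s f hf
  have := congrFun hg k
  simp only [hk] at this
  exact this
end PP

namespace PP
open MvPolynomial Filter Topology

open Classical in
lemma limit {n s D : ℕ} (p : ℕ → (Fin (2^s-1) → ℝ) → MvPolynomial (Fin n) ℝ)
      (hp0 : ∀ j y, p j y ≠ 0)
      (hp : ∀ j x, Continuous fun y => eval x (p j y))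
      (h1 : ∀ j y, (∃ a, bl s a = j ∧ (y a = 1 ∨ y a = -1)) → p j (bneg (bl s) j y) = - p j y)
      (h2 : ∀ i j y, i ≠ j → p i (bneg (bl s) j y) = p i y)
      (Γ : Finset (Set (Fin n → ℝ))) (B : ℝ)
      (hdeg : ∀ y, (∏ j : Fin s, p j y).totalDegree ≤ D)
      (hB : ∀ q : MvPolynomial (Fin n) ℝ, q ≠ 0 → q.totalDegree ≤ D → ∀ γ ∈ Γ,
      {S : Set (Fin n → ℝ) | ∃ x ∈ γ, MvPolynomial.eval x q ≠ 0 ∧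
          S = connectedComponentIn {y : Fin n → ℝ | MvPolynomial.eval y q ≠ 0} x}.Finite ∧
        ({S : Set (Fin n → ℝ) | ∃ x ∈ γ, MvPolynomial.eval x q ≠ 0 ∧
          S = connectedComponentIn {y : Fin n → ℝ | MvPolynomial.eval y q ≠ 0} x}.ncard : ℝ) ≤ B) :
    ∃ y : Fin (2^s-1) → ℝ, ∀ σ : Fin s → ℤˣ,
      2^s * ((Γ.filter fun γ => ∃ x ∈ γ, ∀ j : Fin s, 0 < ((σ j : ℤ) : ℝ) * eval x (p j y)).card : ℝ) ≤ B * Γ.card := by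
  choose A hA1 hA2 using fun γ : Set (Fin n → ℝ) => dense_seq γ
  choose y hy hyT using fun m => step p hp h1 h2 Γ (fun γ => A γ m) m
  have hK : IsCompact (Set.pi Set.univ fun _ : Fin (2^s-1) => Set.Icc (-1:ℝ) 1) :=
    isCompact_univ_pi fun _ => isCompact_Icc
  obtain ⟨z, _, φ, hφ, hlim⟩ := hK.tendsto_subseq (x := y) (fun m c _ => hy m c)
  refine ⟨z, fun σ => ?_⟩
  have hbd : ∀ m, 2^s * ∑ γ ∈ Γ, TT p (A γ m) m σ (y m) ≤ B * Γ.card := by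
    intro m
    refine (hyT m σ).le.trans ?_
    rw [Finset.sum_comm]
    have hcs : B * (Γ.card : ℝ) = ∑ _γ ∈ Γ, B := by
      rw [Finset.sum_const, nsmul_eq_mul, mul_comm]
    rw [hcs]
    refine Finset.sum_le_sum fun γ hγ => ?_
    have hq := hB (∏ j : Fin s, p j (y m)) (Finset.prod_ne_zero_iff.2 fun j _ => hp0 j _) (hdeg _) γ hγ
    have hcl := count_le (fun j : Fin s => p j (y m)) γ B hq
    refine le_trans ?_ hcl
    rw [Finset.card_filter, Nat.cast_sum]
    refine Finset.sum_le_sum fun τ _ => ?_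
    rw [Nat.cast_ite, Nat.cast_one, Nat.cast_zero]
    split_ifs with h
    · exact TT_le_one _ _ _ _ _
    · refine (TT_eq_zero _ _ _ _ _ ?_).le
      rintro ⟨x, hx, hx'⟩
      exact h ⟨x, hA1 _ _ _ hx, hx'⟩
  have hev : ∀ γ ∈ Γ.filter (fun γ => ∃ x ∈ γ, ∀ j : Fin s, 0 < ((σ j : ℤ) : ℝ) * eval x (p j z)),
      ∀ᶠ m in atTop, TT p (A γ (φ m)) (φ m) σ (y (φ m)) = 1 := by
    intro γ hγ
    obtain ⟨hγ, x, hx, hxp⟩ := Finset.mem_filter.1 hγ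
    obtain ⟨w, hw, hwA⟩ := hA2 γ {x | ∀ j : Fin s, 0 < ((σ j : ℤ) : ℝ) * eval x (p j z)}
      (by
        rw [Set.setOf_forall]
        exact isOpen_iInter_of_finite fun j => isOpen_lt continuous_const (continuous_const.mul (cont_eval _)))
      ⟨x, hx, hxp⟩
    have hc : Continuous fun y => ∏ j : Fin s, max 0 (((σ j : ℤ) : ℝ) * eval w (p j y)) :=
      continuous_finsetProd _ fun j _ => continuous_const.max (continuous_const.mul (hp j w))
    have ht := (hc.tendsto z).comp hlim
    have hpos : 0 < ∏ j : Fin s, max 0 (((σ j : ℤ) : ℝ) * eval w (p j z)) :=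
      Finset.prod_pos fun j _ => lt_max_of_lt_right (hw j)
    have ht2 := (tendsto_natCast_atTop_atTop (R := ℝ)).comp hφ.tendsto_atTop
    have ht3 := ht2.atTop_mul_pos hpos ht
    filter_upwards [hφ.tendsto_atTop.eventually hwA, ht3.eventually_ge_atTop 1] with m hm1 hm2
    unfold TT
    apply min_eq_left
    refine hm2.trans ?_
    simp only [Function.comp]
    refine mul_le_mul_of_nonneg_left ?_ (Nat.cast_nonneg _)
    exact Finset.single_le_sum (f := fun x => ∏ j : Fin s, max 0 (((σ j : ℤ) : ℝ) * eval x (p j (y (φ m)))))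
      (fun x _ => Finset.prod_nonneg fun j _ => le_max_left _ _) hm1
  obtain ⟨m, hm⟩ := ((Filter.eventually_all_finset _).2 hev).exists
  refine le_trans ?_ (hbd (φ m))
  refine mul_le_mul_of_nonneg_left ?_ (by positivity)
  rw [Finset.card_eq_sum_ones]
  push_cast
  rw [← Finset.sum_congr rfl hm]
  exact Finset.sum_le_sum_of_subset_of_nonneg (Finset.filter_subset _ _) fun γ _ _ => TT_nonneg _ _ _ _ _
end PP

theorem polynomial_partitioning_varieties (n D : ℕ) (hn : 1 ≤ n) (hD : 1 ≤ D)
    (Γ : Finset (Set (Fin n → ℝ)))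
    (halg : ∀ γ ∈ Γ, ∃ (m : ℕ) (q : Fin m → MvPolynomial (Fin n) ℝ),
      γ = {x : Fin n → ℝ | ∀ k, MvPolynomial.eval x (q k) = 0})
    (B : ℝ) (hB1 : 1 ≤ B)
    (hB : ∀ q : MvPolynomial (Fin n) ℝ, q ≠ 0 → q.totalDegree ≤ D → ∀ γ ∈ Γ,
      {S : Set (Fin n → ℝ) | ∃ x ∈ γ, MvPolynomial.eval x q ≠ 0 ∧
          S = connectedComponentIn {y : Fin n → ℝ | MvPolynomial.eval y q ≠ 0} x}.Finite ∧
        ({S : Set (Fin n → ℝ) | ∃ x ∈ γ, MvPolynomial.eval x q ≠ 0 ∧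
          S = connectedComponentIn {y : Fin n → ℝ | MvPolynomial.eval y q ≠ 0} x}.ncard : ℝ) ≤ B) :
    ∃ p : MvPolynomial (Fin n) ℝ, p ≠ 0 ∧ p.totalDegree ≤ D ∧
      ∀ x : Fin n → ℝ, MvPolynomial.eval x p ≠ 0 →
        ({γ ∈ (Γ : Set (Set (Fin n → ℝ))) |
            (γ ∩ connectedComponentIn {y : Fin n → ℝ | MvPolynomial.eval y p ≠ 0} x).Nonempty}.ncard : ℝ) ≤
          (2 ^ (n + 1) * (Nat.factorial n : ℝ) / ((2 : ℝ) ^ ((1 : ℝ) / n) - 1) ^ n) *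
            B * ((D : ℝ) ^ n)⁻¹ * Γ.card := by
  classical
  obtain ⟨s, d, hd1, hd2, hd3⟩ := PP.degrees n D hn hD
  obtain ⟨p, hp0, hpd, hpc, hpf, hpn⟩ := PP.family n s d hd2
  obtain ⟨y, hy⟩ := PP.limit p hp0 hpc hpf hpn Γ B (D := D) (by
    intro y
    refine (MvPolynomial.totalDegree_finsetProd _ _).trans ?_
    refine le_trans ?_ hd1
    rw [← Fin.sum_univ_eq_sum_range]
    exact Finset.sum_le_sum fun j _ => hpd _ _) hB
  have hne : (∏ j : Fin s, p j y) ≠ 0 := Finset.prod_ne_zero_iff.2 fun j _ => hp0 j y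
  refine ⟨∏ j : Fin s, p j y, hne, ?_, ?_⟩
  · refine (MvPolynomial.totalDegree_finsetProd _ _).trans ?_
    refine le_trans ?_ hd1
    rw [← Fin.sum_univ_eq_sum_range]
    exact Finset.sum_le_sum fun j _ => hpd _ _
  · intro x hx
    have hx' : ∀ j : Fin s, MvPolynomial.eval x (p j y) ≠ 0 := by
      rw [map_prod] at hx
      exact fun j => Finset.prod_ne_zero_iff.1 hx j (Finset.mem_univ _)
    have hσ : ∀ j : Fin s, ∃ e : ℤˣ, 0 < ((e : ℤ) : ℝ) * MvPolynomial.eval x (p j y) := by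
      intro j
      rcases lt_or_gt_of_ne (hx' j) with h | h
      · exact ⟨-1, by push_cast; linarith⟩
      · exact ⟨1, by push_cast; linarith⟩
    choose σ hσ using hσ
    have h1 := hy σ
    have h2 : ({γ ∈ (Γ : Set (Set (Fin n → ℝ))) |
            (γ ∩ connectedComponentIn {y_1 : Fin n → ℝ | MvPolynomial.eval y_1 (∏ j : Fin s, p j y) ≠ 0} x).Nonempty}.ncard : ℝ)
        ≤ ((Γ.filter fun γ => ∃ x ∈ γ, ∀ j : Fin s, 0 < ((σ j : ℤ) : ℝ) * MvPolynomial.eval x (p j y)).card : ℝ) := by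
      rw [← Set.ncard_coe_finset]
      refine Nat.cast_le.2 (Set.ncard_le_ncard ?_ (Finset.finite_toSet _))
      rintro γ ⟨hγ, z, hz, hzc⟩
      rw [Finset.mem_coe, Finset.mem_filter]
      exact ⟨hγ, z, hz, PP.sign_comp (fun j : Fin s => p j y) σ x z hzc hσ⟩
    refine h2.trans ?_
    have h3 : (0:ℝ) < 2^s := by positivity
    have h4 : ((Γ.filter fun γ => ∃ x ∈ γ, ∀ j : Fin s, 0 < ((σ j : ℤ) : ℝ) * MvPolynomial.eval x (p j y)).card : ℝ)
        ≤ ((2:ℝ)^s)⁻¹ * (B * Γ.card) := by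
      rw [inv_mul_eq_div, le_div_iff₀ h3, mul_comm]
      exact h1
    refine h4.trans ?_
    refine (mul_le_mul_of_nonneg_right hd3 (mul_nonneg (by linarith) (Nat.cast_nonneg _))).trans (le_of_eq ?_)
    ring
end
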